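/- arXiv:2304.04373 — 5 statements merged into one kernel-verified Lean document; each statement's English description precedes it below -/
import Mathlib

section
/- Let -∞ < a < b < ∞, 1 < p < ∞ with conjugate exponent p' = p/(p−1), let μ and w be weights on [a,b], and let Φ be a Young function that is submultiplicative and invertible on [0,∞) such that Λ(t) = Φ(t^{1/p}) is convex. Define T := sup_{a<x<b} { [Φ^{-1}(μ[a,x]^{-1/2})]^{-2} · (∫_x^b w(t)^{1−p'} dt)^{1/p'} }. If T < ∞, then for every f ∈ L_w^p[a,b], ‖ x ↦ ∫_x^b f(t) dt ‖_{L_μ^Φ[a,b]} ≤ C₀(Φ) · T · ‖f‖_{L_w^p[a,b]}, where C₀(Φ) := 2·[Φ^{-1}(1/2)]^{-1}. -/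
open MeasureTheory Set Filter
open scoped ENNReal NNReal

noncomputable section

/-- A Young function: even, convex, vanishing at `0`, nonnegative, tending to `∞`. -/
def IsYoung (Φ : ℝ → ℝ) : Prop :=
  ConvexOn ℝ Set.univ Φ ∧ (∀ t, Φ (-t) = Φ t) ∧ Φ 0 = 0 ∧ (∀ t, 0 ≤ Φ t) ∧
    Filter.Tendsto Φ Filter.atTop Filter.atTop

/-- A weight on `[a,b]`: nonnegative, measurable, positive a.e. on `[a,b]`. -/
def IsWeight (w : ℝ → ℝ) (a b : ℝ) : Prop :=
  Measurable w ∧ (∀ x, 0 ≤ w x) ∧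
    ∀ᵐ x ∂(MeasureTheory.volume.restrict (Set.Icc a b)), 0 < w x

/-- `Φ` is submultiplicative on `[0,∞)`. -/
def Submult (Φ : ℝ → ℝ) : Prop :=
  ∀ s t : ℝ, 0 ≤ s → 0 ≤ t → Φ (s * t) ≤ Φ s * Φ t

/-- `Φinv` is the inverse of `Φ` restricted to `[0,∞)`. -/
def IsYoungInv (Φ Φinv : ℝ → ℝ) : Prop :=
  (∀ t, 0 ≤ t → 0 ≤ Φinv t) ∧ (∀ t, 0 ≤ t → Φ (Φinv t) = t) ∧
    (∀ t, 0 ≤ t → Φinv (Φ t) = t)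

/-- `μ[x,y] := ∫ₓ^y μ(t) dt`, as an extended nonnegative real. -/
def wInt (μ : ℝ → ℝ) (x y : ℝ) : ℝ≥0∞ :=
  ∫⁻ t in Set.Icc x y, ENNReal.ofReal (μ t)

/-- The Luxemburg (gauge) norm of `f` on `[a,b]` w.r.t. the Young function `Φ`
and the weight `μ`: `inf {k > 0 : ∫ₐ^b Φ(f/k) μ ≤ 1}` (`∞` if no such `k`). -/
def luxNorm (Φ μ : ℝ → ℝ) (a b : ℝ) (f : ℝ → ℝ) : ℝ≥0∞ :=
  sInf {k : ℝ≥0∞ | ∃ c : ℝ, 0 < c ∧ k = ENNReal.ofReal c ∧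
    (∫⁻ x in Set.Icc a b, ENNReal.ofReal (Φ (f x / c) * μ x)) ≤ 1}

/-- `f` is Lipschitz on `[a,b]` and `f'` is a.e. its derivative on `(a,b)`. -/
def LipschitzWithDeriv (f f' : ℝ → ℝ) (a b : ℝ) : Prop :=
  (∃ K, LipschitzOnWith K f (Set.Icc a b)) ∧
    ∀ᵐ x ∂(MeasureTheory.volume.restrict (Set.Ioo a b)), HasDerivAt f (f' x) x

/-- The weighted `L^p` norm `(∫ₐ^b |g|^p w)^{1/p}`, as an extended nonnegative real. -/
def lpNorm (w : ℝ → ℝ) (p a b : ℝ) (g : ℝ → ℝ) : ℝ≥0∞ :=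
  (∫⁻ t in Set.Icc a b, ENNReal.ofReal (|g t| ^ p * w t)) ^ (1 / p)

/-- The Luxemburg (gauge) norm on a general measure space. -/
def luxNormGen {Ω : Type*} [MeasurableSpace Ω] (Φ : ℝ → ℝ) (μ : Measure Ω)
    (f : Ω → ℝ) : ℝ≥0∞ :=
  sInf {k : ℝ≥0∞ | ∃ c : ℝ, 0 < c ∧ k = ENNReal.ofReal c ∧
    (∫⁻ x, ENNReal.ofReal (Φ (f x / c)) ∂μ) ≤ 1}

/-- The Luxemburg (gauge) norm for an extended-real-valued Young function. -/
def luxNormE {Ω : Type*} [MeasurableSpace Ω] (Ψ : ℝ → ℝ≥0∞) (μ : Measure Ω)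
    (f : Ω → ℝ) : ℝ≥0∞ :=
  sInf {k : ℝ≥0∞ | ∃ c : ℝ, 0 < c ∧ k = ENNReal.ofReal c ∧
    (∫⁻ x, Ψ (f x / c) ∂μ) ≤ 1}

lemma oh_layer {α : Type*} [MeasurableSpace α] (ν : Measure α) [IsFiniteMeasure ν] (u : α → ℝ)
    (hu : Measurable u) (hu0 : ∀ x, 0 ≤ u x)
    (h : ∀ r : ℝ, 0 < r → ν {x | u x < r} ≤ ENNReal.ofReal r) :
    ∫⁻ x, ENNReal.ofReal (u x ^ (-(1/2) : ℝ)) ∂ν ≤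
      ENNReal.ofReal (2 * (ν univ).toReal ^ (1/2 : ℝ)) := by
  rcases eq_or_ne ν 0 with h0 | h0
  · simp [h0]
  set M := (ν univ).toReal with hM
  have hMpos : 0 < M := ENNReal.toReal_pos (by simpa using h0) (measure_ne_top _ _)
  have hMe : ν univ = ENNReal.ofReal M := (ENNReal.ofReal_toReal (measure_ne_top _ _)).symm
  set s0 := M ^ (-(1/2) : ℝ) with hs0
  have hs0pos : 0 < s0 := by positivity
  rw [lintegral_eq_lintegral_meas_lt ν (ae_of_all _ fun x => Real.rpow_nonneg (hu0 x) _)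
    (by fun_prop)]
  have hsplit : Ioi (0:ℝ) = Ioc 0 s0 ∪ Ioi s0 := (Ioc_union_Ioi_eq_Ioi hs0pos.le).symm
  rw [hsplit, lintegral_union measurableSet_Ioi (by
    rw [Set.disjoint_left]; intro x hx hx'; exact absurd hx.2 (not_le.2 hx'))]
  have h1 : ∫⁻ s in Ioc 0 s0, ν {x | s < u x ^ (-(1/2) : ℝ)} ≤ ENNReal.ofReal (M ^ (1/2:ℝ)) := by
    calc _ ≤ ∫⁻ s in Ioc 0 s0, ENNReal.ofReal M := by
          apply lintegral_mono; intro s; rw [← hMe]; exact measure_mono (subset_univ _)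
      _ = ENNReal.ofReal (M * s0) := by
          rw [lintegral_const]; simp [ENNReal.ofReal_mul hMpos.le]
      _ = _ := by
          congr 1
          rw [hs0]; nth_rewrite 1 [← Real.rpow_one M]
          rw [← Real.rpow_add hMpos]; norm_num
  have h2 : ∫⁻ s in Ioi s0, ν {x | s < u x ^ (-(1/2) : ℝ)} ≤ ENNReal.ofReal (M ^ (1/2:ℝ)) := by
    calc _ ≤ ∫⁻ s in Ioi s0, ENNReal.ofReal (s ^ (-2:ℝ)) := by
          apply setLIntegral_mono' measurableSet_Ioi
          intro s hs
          have hs' : 0 < s := hs0pos.trans hs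
          refine le_trans (measure_mono ?_) (h _ (by positivity))
          intro x hx
          simp only [mem_ofPred_eq] at hx ⊢
          rcases (hu0 x).eq_or_lt with h' | h'
          · rw [← h']; positivity
          · have := Real.rpow_lt_rpow_of_neg hs' hx (show (-2:ℝ) < 0 by norm_num)
            rw [← Real.rpow_mul h'.le] at this
            norm_num at this
            simpa using this
      _ = ENNReal.ofReal (∫ s in Ioi s0, s ^ (-2:ℝ)) := by
          rw [ofReal_integral_eq_lintegral_ofReal]
          · exact integrableOn_Ioi_rpow_of_lt (by norm_num) hs0pos
          · filter_upwards [ae_restrict_mem measurableSet_Ioi] with s hs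
            exact Real.rpow_nonneg (hs0pos.trans hs).le _
      _ = _ := by
          rw [integral_Ioi_rpow_of_lt (by norm_num) hs0pos]
          congr 1
          rw [hs0, ← Real.rpow_mul hMpos.le]; norm_num
  calc _ ≤ _ := add_le_add h1 h2
    _ = _ := by rw [← ENNReal.ofReal_add (by positivity) (by positivity), two_mul]

lemma oh_left (ρ : Measure ℝ) [IsFiniteMeasure ρ] (S : Set ℝ) (hS : MeasurableSet S)
    (hρ : ρ Sᶜ = 0) (u : ℝ → ℝ) (hu : Measurable u)
    (h : (∀ x ∈ S, ρ (Iic x) ≤ ENNReal.ofReal (u x)) ∨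
         (∀ x ∈ S, ρ (Ici x) ≤ ENNReal.ofReal (u x))) (r : ℝ) :
    ρ {x | u x < r} ≤ ENNReal.ofReal r := by
  have hm : MeasurableSet ({x | u x < r} ∩ S) := (measurableSet_lt hu measurable_const).inter hS
  have h1 : ρ {x | u x < r} ≤ ρ ({x | u x < r} ∩ S) := by
    calc _ ≤ ρ (({x | u x < r} ∩ S) ∪ Sᶜ) := measure_mono (by
            intro x hx; by_cases hxS : x ∈ S
            · exact Or.inl ⟨hx, hxS⟩
            · exact Or.inr hxS)
      _ ≤ _ := (measure_union_le _ _).trans (by simp [hρ])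
  refine h1.trans ?_
  rw [hm.measure_eq_iSup_isCompact]
  refine iSup₂_le fun K hK => iSup_le fun hKc => ?_
  rcases K.eq_empty_or_nonempty with rfl | hne
  · simp
  rcases h with h | h
  · obtain ⟨x, hx⟩ := hKc.exists_isGreatest hne
    exact (measure_mono fun y hy => hx.2 hy).trans
      ((h x (hK hx.1).2).trans (ENNReal.ofReal_le_ofReal (hK hx.1).1.le))
  · obtain ⟨x, hx⟩ := hKc.exists_isLeast hne
    exact (measure_mono fun y hy => hx.2 hy).trans
      ((h x (hK hx.1).2).trans (ENNReal.ofReal_le_ofReal (hK hx.1).1.le))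

lemma oh_measL (g : ℝ → ℝ≥0∞) (a : ℝ) : Measurable (fun x => ∫⁻ t in Icc a x, g t) :=
  Monotone.measurable fun _ _ h => lintegral_mono_set (Icc_subset_Icc_right h)

lemma oh_measR (g : ℝ → ℝ≥0∞) (b : ℝ) : Measurable (fun x => ∫⁻ t in Icc x b, g t) :=
  Antitone.measurable fun _ _ h => lintegral_mono_set (Icc_subset_Icc_left h)

lemma oh_intL (g : ℝ → ℝ≥0∞) (hg : Measurable g) (a t : ℝ) (hfin : ∫⁻ x in Icc a t, g x ≠ ⊤) :
    ∫⁻ x in Ioo a t, g x * ENNReal.ofReal ((∫⁻ y in Icc a x, g y).toReal ^ (-(1/2) : ℝ)) ≤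
      ENNReal.ofReal (2 * (∫⁻ y in Icc a t, g y).toReal ^ (1/2 : ℝ)) := by
  set ρ := (volume.restrict (Ioo a t)).withDensity g with hρ
  have huniv : ρ univ = ∫⁻ x in Icc a t, g x := by
    rw [hρ, withDensity_apply _ MeasurableSet.univ, Measure.restrict_univ, restrict_Ioo_eq_restrict_Icc]
  have : IsFiniteMeasure ρ := ⟨by rw [huniv]; exact hfin.lt_top⟩
  have hm : Measurable (fun x => (∫⁻ y in Icc a x, g y).toReal) := (oh_measL g a).ennreal_toReal
  have key := oh_layer ρ (fun x => (∫⁻ y in Icc a x, g y).toReal) hm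
    (fun _ => ENNReal.toReal_nonneg) (fun r _ => oh_left ρ (Ioo a t) measurableSet_Ioo ?_ _ hm
      (Or.inl ?_) r)
  · rw [huniv, hρ, lintegral_withDensity_eq_lintegral_mul _ hg (by fun_prop)] at key
    exact key
  · rw [hρ, withDensity_apply _ measurableSet_Ioo.compl, Measure.restrict_restrict measurableSet_Ioo.compl]
    simp
  · intro x hx
    rw [ENNReal.ofReal_toReal]
    · rw [hρ, withDensity_apply _ measurableSet_Iic, Measure.restrict_restrict measurableSet_Iic]
      exact lintegral_mono_set fun y hy => ⟨hy.2.1.le, hy.1⟩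
    · exact ne_top_of_le_ne_top hfin (lintegral_mono_set (Icc_subset_Icc_right hx.2.le))

lemma oh_intR (g : ℝ → ℝ≥0∞) (hg : Measurable g) (t b : ℝ) (hfin : ∫⁻ x in Icc t b, g x ≠ ⊤) :
    ∫⁻ x in Ioo t b, g x * ENNReal.ofReal ((∫⁻ y in Icc x b, g y).toReal ^ (-(1/2) : ℝ)) ≤
      ENNReal.ofReal (2 * (∫⁻ y in Icc t b, g y).toReal ^ (1/2 : ℝ)) := by
  set ρ := (volume.restrict (Ioo t b)).withDensity g with hρ
  have huniv : ρ univ = ∫⁻ x in Icc t b, g x := by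
    rw [hρ, withDensity_apply _ MeasurableSet.univ, Measure.restrict_univ, restrict_Ioo_eq_restrict_Icc]
  have : IsFiniteMeasure ρ := ⟨by rw [huniv]; exact hfin.lt_top⟩
  have hm : Measurable (fun x => (∫⁻ y in Icc x b, g y).toReal) := (oh_measR g b).ennreal_toReal
  have key := oh_layer ρ (fun x => (∫⁻ y in Icc x b, g y).toReal) hm
    (fun _ => ENNReal.toReal_nonneg) (fun r _ => oh_left ρ (Ioo t b) measurableSet_Ioo ?_ _ hm
      (Or.inr ?_) r)
  · rw [huniv, hρ, lintegral_withDensity_eq_lintegral_mul _ hg (by fun_prop)] at key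
    exact key
  · rw [hρ, withDensity_apply _ measurableSet_Ioo.compl, Measure.restrict_restrict measurableSet_Ioo.compl]
    simp
  · intro x hx
    rw [ENNReal.ofReal_toReal]
    · rw [hρ, withDensity_apply _ measurableSet_Ici, Measure.restrict_restrict measurableSet_Ici]
      exact lintegral_mono_set fun y hy => ⟨hy.1, hy.2.2.le⟩
    · exact ne_top_of_le_ne_top hfin (lintegral_mono_set (Icc_subset_Icc_left hx.1.le))

lemma oh_holder (p pc : ℝ) (hc : p.HolderConjugate pc) (f w v : ℝ → ℝ) (hf : Measurable f)
    (hw : Measurable w) (hv : Measurable v) (S : Set ℝ) (hS : MeasurableSet S)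
    (hw0 : ∀ᵐ t ∂(volume.restrict S), 0 < w t) (hv0 : ∀ t ∈ S, 0 < v t) :
    ∫⁻ t in S, ENNReal.ofReal |f t| ≤
      (∫⁻ t in S, ENNReal.ofReal (|f t| ^ p * w t * v t ^ (p / (2 * pc)))) ^ (1 / p) *
      (∫⁻ t in S, ENNReal.ofReal (w t ^ (1 - pc)) * ENNReal.ofReal (v t ^ (-(1/2) : ℝ))) ^ (1 / pc) := by
  have hp0 := hc.pos
  have hpc0 := hc.symm.pos
  have h := ENNReal.lintegral_mul_le_Lp_mul_Lq (volume.restrict S) hc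
    (f := fun t => ENNReal.ofReal (|f t| * w t ^ (1 / p) * v t ^ (1 / (2 * pc))))
    (g := fun t => ENNReal.ofReal (w t ^ (-(1 / p)) * v t ^ (-(1 / (2 * pc)))))
    (by fun_prop) (by fun_prop)
  refine le_trans (le_of_eq ?_) (h.trans (le_of_eq ?_))
  · apply lintegral_congr_ae
    filter_upwards [hw0, ae_restrict_mem hS] with t ht htS
    have := hv0 t htS
    simp only [Pi.mul_apply]
    rw [← ENNReal.ofReal_mul (by positivity), Real.rpow_neg ht.le, Real.rpow_neg this.le]
    congr 1
    have h1 : w t ^ (1 / p) ≠ 0 := by positivity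
    have h2 : v t ^ (1 / (2 * pc)) ≠ 0 := by positivity
    field_simp
  · congr 2
    · apply lintegral_congr_ae
      filter_upwards [hw0, ae_restrict_mem hS] with t ht htS
      have := hv0 t htS
      rw [ENNReal.ofReal_rpow_of_nonneg (by positivity) hp0.le, Real.mul_rpow (by positivity) (by positivity),
        Real.mul_rpow (by positivity) (by positivity), ← Real.rpow_mul ht.le, ← Real.rpow_mul this.le,
        one_div_mul_cancel hp0.ne', Real.rpow_one, one_div_mul_eq_div]
    · apply lintegral_congr_ae
      filter_upwards [hw0, ae_restrict_mem hS] with t ht htS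
      have := hv0 t htS
      rw [ENNReal.ofReal_rpow_of_nonneg (by positivity) hpc0.le, Real.mul_rpow (by positivity) (by positivity),
        ← Real.rpow_mul ht.le, ← Real.rpow_mul this.le, ← ENNReal.ofReal_mul (by positivity)]
      have e1 : -(1 / p) * pc = 1 - pc := by
        have := hc.inv_add_inv_eq_one
        field_simp at this ⊢
        linarith
      have e2 : -(1 / (2 * pc)) * pc = -(1/2) := by field_simp
      rw [e1, e2]

lemma oh_bdd_int (ν : Measure ℝ) [IsFiniteMeasure ν] (G : ℝ → ℝ) (hG : Measurable G) (B : ℝ)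
    (h0 : ∀ t, 0 ≤ G t) (hB : ∀ t, G t ≤ B) : Integrable G ν :=
  Integrable.of_bound hG.aestronglyMeasurable B (ae_of_all _ fun t => by
    rw [Real.norm_of_nonneg (h0 t)]; exact hB t)

lemma oh_mono (Φ : ℝ → ℝ) (hΦ : IsYoung Φ) : MonotoneOn Φ (Ici 0) := by
  obtain ⟨hc, he, h0, hn, -⟩ := hΦ
  intro s hs t ht hst
  simp only [mem_Ici] at hs ht
  rcases hs.eq_or_lt with rfl | hs
  · rw [h0]; exact hn t
  have ht : 0 < t := hs.trans_le hst
  have ha1 : 0 ≤ 1 - s / t := by rw [sub_nonneg, div_le_one ht]; exact hst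
  have hb1 : 0 ≤ s / t := by positivity
  have h := hc.2 (mem_univ 0) (mem_univ t) ha1 hb1 (by ring)
  simp only [smul_eq_mul, mul_zero, zero_add, h0, div_mul_cancel₀ _ ht.ne'] at h
  refine h.trans (mul_le_of_le_one_left (hn t) ((div_le_one ht).2 hst))

lemma oh_jensen (ν : Measure ℝ) [IsProbabilityMeasure ν] (Φ : ℝ → ℝ) (hΦ : IsYoung Φ) (p : ℝ)
    (hp : 1 < p) (hΛ : ConvexOn ℝ Set.univ (fun t => Φ (|t| ^ (1 / p))))
    (G : ℝ → ℝ) (hG : Measurable G) (B : ℝ) (h0 : ∀ t, 0 ≤ G t) (hB : ∀ t, G t ≤ B) :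
    ENNReal.ofReal (Φ ((∫ t, G t ^ p ∂ν) ^ (1 / p))) ≤ ∫⁻ t, ENNReal.ofReal (Φ (G t)) ∂ν := by
  have hp0 : 0 < p := by linarith
  have hcont : Continuous Φ := by
    rw [← continuousOn_univ]; exact hΦ.1.continuousOn isOpen_univ
  have hcontΛ : ContinuousOn (fun t => Φ (|t| ^ (1 / p))) univ := hΛ.continuousOn isOpen_univ
  have hi1 : Integrable (fun t => G t ^ p) ν := oh_bdd_int ν _ (by fun_prop) (B ^ p)
    (fun t => Real.rpow_nonneg (h0 t) _) (fun t => Real.rpow_le_rpow (h0 t) (hB t) hp0.le)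
  have hi2 : Integrable (fun t => Φ (G t)) ν := oh_bdd_int ν _ (by fun_prop) (Φ B)
    (fun t => hΦ.2.2.2.1 _)
    (fun t => oh_mono Φ hΦ (h0 t) ((h0 t).trans (hB t)) (hB t))
  have e : ∀ t, Φ (|G t ^ p| ^ (1 / p)) = Φ (G t) := fun t => by
    rw [abs_of_nonneg (Real.rpow_nonneg (h0 t) _), ← Real.rpow_mul (h0 t),
      mul_one_div_cancel hp0.ne', Real.rpow_one]
  have := hΛ.map_integral_le (μ := ν) hcontΛ isClosed_univ (ae_of_all _ fun _ => mem_univ _) hi1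
    (by
      have : (fun t => Φ (|t| ^ (1 / p))) ∘ (fun t => G t ^ p) = fun t => Φ (G t) := funext e
      rw [this]; exact hi2)
  simp only [e] at this
  rw [abs_of_nonneg (integral_nonneg fun t => Real.rpow_nonneg (h0 t) _)] at this
  rw [← ofReal_integral_eq_lintegral_ofReal hi2 (ae_of_all _ fun t => hΦ.2.2.2.1 _)]
  exact ENNReal.ofReal_le_ofReal this

lemma oh_point (p pc : ℝ) (hc : p.HolderConjugate pc) (f w : ℝ → ℝ) (hf : Measurable f)
    (hw : Measurable w) (hwn : ∀ x, 0 ≤ w x) (a b x : ℝ) (hx : x ∈ Ioo a b)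
    (hw0 : ∀ᵐ t ∂(volume.restrict (Ioo a b)), 0 < w t)
    (V : ℝ → ℝ≥0∞) (hVdef : V = fun t => ∫⁻ s in Icc t b, ENNReal.ofReal (w s ^ (1 - pc)))
    (hV : ∀ t ∈ Ioo a b, V t ≠ 0 ∧ V t ≠ ⊤)
    (ψ : ℝ → ℝ) (hψm : Measurable ψ) (hψ : ∀ t ∈ Ioo a b, 0 < ψ t)
    (hanti : ∀ t ∈ Ioo x b, ψ t ≤ ψ x) (τ : ℝ) (hτ0 : 0 < τ)
    (hτ : ∀ t ∈ Ioo a b, (V t).toReal ^ (1 / pc) ≤ τ * ψ t ^ 2) (I : ℝ) (hI0 : 0 < I)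
    (ν : Measure ℝ) [IsProbabilityMeasure ν]
    (hν : ν = (volume.restrict (Ioo a b)).withDensity
      (fun t => ENNReal.ofReal (|f t| ^ p * w t / I)))
    (m : ℝ) (hm : 0 < m) :
    ∫⁻ t in Ioo x b, ENNReal.ofReal |f t| ≤ ENNReal.ofReal (2 * m⁻¹ * τ * I ^ (1 / p) *
      (∫ t, ((Ioo x b).indicator (fun t => m * ψ x * ψ t) t) ^ p ∂ν) ^ (1 / p)) := by
  have hp0 := hc.pos
  have hpc0 := hc.symm.pos
  have hpc1 := hc.symm.lt
  have hψx := hψ x hx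
  have hss : Ioo x b ⊆ Ioo a b := Ioo_subset_Ioo_left hx.1.le
  set G := (Ioo x b).indicator (fun t => m * ψ x * ψ t) with hG
  have hGm : Measurable G := Measurable.indicator (by fun_prop) measurableSet_Ioo
  have hG0 : ∀ t, 0 ≤ G t := fun t => indicator_nonneg (fun t ht => by
    have := hψ t (hss ht); positivity) t
  have hGB : ∀ t, G t ≤ m * ψ x * ψ x := fun t => by
    apply indicator_le' (fun t ht => ?_) (fun t _ => ?_)
    · have := hanti t ht; gcongr
    · positivity
  have hi1 : Integrable (fun t => G t ^ p) ν := oh_bdd_int ν _ (by fun_prop) ((m * ψ x * ψ x) ^ p)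
    (fun t => Real.rpow_nonneg (hG0 t) _) (fun t => Real.rpow_le_rpow (hG0 t) (hGB t) hp0.le)
  set J := ∫ t, G t ^ p ∂ν with hJ
  have hJ0 : 0 ≤ J := integral_nonneg fun t => Real.rpow_nonneg (hG0 t) _
  have hJe : ENNReal.ofReal J = ∫⁻ t in Ioo a b, ENNReal.ofReal (|f t| ^ p * w t / I) *
      ENNReal.ofReal (G t ^ p) := by
    rw [hJ, ofReal_integral_eq_lintegral_ofReal hi1 (ae_of_all _ fun t => Real.rpow_nonneg (hG0 t) _),
      hν, lintegral_withDensity_eq_lintegral_mul _ (by fun_prop) (by fun_prop)]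
    rfl
  have hVm : Measurable fun t => (V t).toReal := by
    rw [hVdef]; exact (oh_measR _ b).ennreal_toReal
  have hV0 : ∀ t ∈ Ioo a b, 0 < (V t).toReal := fun t ht => ENNReal.toReal_pos (hV t ht).1 (hV t ht).2
  have hH := oh_holder p pc hc f w (fun t => (V t).toReal) hf hw hVm (Ioo x b) measurableSet_Ioo
    (ae_restrict_of_ae_restrict_of_subset hss hw0) (fun t ht => hV0 t (hss ht))
  refine hH.trans ?_
  set K := τ ^ (p / 2) * I / (m * ψ x) ^ p with hK
  have hK0 : 0 < K := by positivity
  have h1 : ∫⁻ t in Ioo x b, ENNReal.ofReal (|f t| ^ p * w t * (V t).toReal ^ (p / (2 * pc))) ≤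
      ENNReal.ofReal (K * J) := by
    rw [ENNReal.ofReal_mul hK0.le, hJe, ← lintegral_const_mul _ (by fun_prop)]
    refine le_trans (setLIntegral_mono' measurableSet_Ioo fun t ht => ?_) (lintegral_mono_set hss)
    have hv := hV0 t (hss ht)
    have hψt := hψ t (hss ht)
    have hwt := hwn t
    rw [← ENNReal.ofReal_mul (by positivity), ← ENNReal.ofReal_mul hK0.le]
    apply ENNReal.ofReal_le_ofReal
    have hGt : G t = m * ψ x * ψ t := indicator_of_mem ht _
    have e1 : (V t).toReal ^ (p / (2 * pc)) ≤ τ ^ (p / 2) * ψ t ^ p := by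
      calc (V t).toReal ^ (p / (2 * pc)) = ((V t).toReal ^ (1 / pc)) ^ (p / 2) := by
            rw [← Real.rpow_mul hv.le]; congr 1; field_simp
        _ ≤ (τ * ψ t ^ 2) ^ (p / 2) := Real.rpow_le_rpow (by positivity) (hτ t (hss ht)) (by positivity)
        _ = _ := by
            rw [Real.mul_rpow hτ0.le (by positivity), ← Real.rpow_natCast, ← Real.rpow_mul hψt.le]
            congr 2; push_cast; field_simp
    calc _ ≤ |f t| ^ p * w t * (τ ^ (p / 2) * ψ t ^ p) := by gcongr
      _ = _ := by
        rw [hGt, hK, Real.mul_rpow (by positivity : 0 ≤ m * ψ x) hψt.le]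
        have : (m * ψ x) ^ p ≠ 0 := by positivity
        field_simp
  have h2 := oh_intR (fun s => ENNReal.ofReal (w s ^ (1 - pc))) (by fun_prop) x b
    (by have := (hV x hx).2; rw [hVdef] at this; exact this)
  have h2' : ∫⁻ t in Ioo x b, ENNReal.ofReal (w t ^ (1 - pc)) * ENNReal.ofReal ((V t).toReal ^ (-(1/2) : ℝ))
      ≤ ENNReal.ofReal (2 * (V x).toReal ^ (1/2:ℝ)) := by
    rw [hVdef]; exact h2
  have hv := hV0 x hx
  calc _ ≤ ENNReal.ofReal (K * J) ^ (1 / p) * ENNReal.ofReal (2 * (V x).toReal ^ (1/2:ℝ)) ^ (1 / pc) := by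
        gcongr
    _ = ENNReal.ofReal ((K * J) ^ (1 / p) * (2 * (V x).toReal ^ (1/2:ℝ)) ^ (1 / pc)) := by
        rw [ENNReal.ofReal_rpow_of_nonneg (by positivity) (by positivity),
          ENNReal.ofReal_rpow_of_nonneg (by positivity) (by positivity),
          ENNReal.ofReal_mul (by positivity)]
    _ ≤ _ := by
        apply ENNReal.ofReal_le_ofReal
        have e1 : (K * J) ^ (1 / p) = τ ^ (1/2:ℝ) * I ^ (1 / p) / (m * ψ x) * J ^ (1 / p) := by
          rw [Real.mul_rpow hK0.le hJ0, hK, Real.div_rpow (by positivity) (by positivity),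
            Real.mul_rpow (by positivity) (by positivity), ← Real.rpow_mul hτ0.le,
            ← Real.rpow_mul (by positivity : 0 ≤ m * ψ x), mul_one_div_cancel hp0.ne', Real.rpow_one]
          congr 4; field_simp
        have e2 : (2 * (V x).toReal ^ (1/2:ℝ)) ^ (1 / pc) ≤ 2 * (τ ^ (1/2:ℝ) * ψ x) := by
          rw [Real.mul_rpow (by norm_num) (by positivity)]
          apply mul_le_mul _ _ (by positivity) (by norm_num)
          · calc (2:ℝ) ^ (1 / pc) ≤ 2 ^ (1:ℝ) := Real.rpow_le_rpow_of_exponent_le (by norm_num) (by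
                  rw [div_le_one hpc0]; exact hpc1.le)
              _ = 2 := Real.rpow_one 2
          · calc ((V x).toReal ^ (1/2:ℝ)) ^ (1 / pc) = ((V x).toReal ^ (1 / pc)) ^ (1/2:ℝ) := by
                  rw [← Real.rpow_mul hv.le, ← Real.rpow_mul hv.le, mul_comm]
              _ ≤ (τ * ψ x ^ 2) ^ (1/2:ℝ) := Real.rpow_le_rpow (by positivity) (hτ x hx) (by positivity)
              _ = _ := by
                rw [Real.mul_rpow hτ0.le (by positivity), ← Real.rpow_natCast, ← Real.rpow_mul hψx.le]
                norm_num
        have e3 : τ ^ (1/2:ℝ) * τ ^ (1/2:ℝ) = τ := by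
          rw [← Real.rpow_add hτ0]; norm_num
        calc _ ≤ (τ ^ (1/2:ℝ) * I ^ (1 / p) / (m * ψ x) * J ^ (1 / p)) * (2 * (τ ^ (1/2:ℝ) * ψ x)) := by
              rw [e1]; gcongr
          _ = 2 * m⁻¹ * (τ ^ (1/2:ℝ) * τ ^ (1/2:ℝ)) * I ^ (1 / p) * J ^ (1 / p) := by
              field_simp
          _ = _ := by rw [e3]

lemma oh_pos (g : ℝ → ℝ) (hg : Measurable g) (S : Set ℝ)
    (h : ∀ᵐ x ∂(volume.restrict S), 0 < g x) (hS : volume S ≠ 0) :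
    ∫⁻ x in S, ENNReal.ofReal (g x) ≠ 0 := by
  intro h0
  rw [lintegral_eq_zero_iff (by fun_prop)] at h0
  have : ∀ᵐ x ∂(volume.restrict S), False := by
    filter_upwards [h, h0] with x hx hx0
    simp only [Pi.zero_apply, ENNReal.ofReal_eq_zero] at hx0
    linarith
  rw [ae_iff] at this
  simp at this
  exact hS this

lemma oh_main (a b : ℝ) (p pc : ℝ) (hc : p.HolderConjugate pc)
    (Φ Φinv μ w : ℝ → ℝ)
    (hΦ : IsYoung Φ) (hsub : Submult Φ) (hinv : IsYoungInv Φ Φinv)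
    (hΛ : ConvexOn ℝ Set.univ (fun t => Φ (|t| ^ (1 / p))))
    (hμ : IsWeight μ a b) (hw : IsWeight w a b) (τ : ℝ) (hτ0 : 0 < τ)
    (U V : ℝ → ℝ≥0∞) (hUdef : U = fun t => ∫⁻ s in Icc a t, ENNReal.ofReal (μ s))
    (hVdef : V = fun t => ∫⁻ s in Icc t b, ENNReal.ofReal (w s ^ (1 - pc)))
    (hU : ∀ t ∈ Ioo a b, U t ≠ 0 ∧ U t ≠ ⊤)
    (hV : ∀ t ∈ Ioo a b, V t ≠ 0 ∧ V t ≠ ⊤)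
    (ψ : ℝ → ℝ) (hψdef : ψ = fun t => Φinv ((U t).toReal ^ (-(1/2) : ℝ)))
    (hψ : ∀ t ∈ Ioo a b, 0 < ψ t)
    (hτ : ∀ t ∈ Ioo a b, (V t).toReal ^ (1 / pc) ≤ τ * ψ t ^ 2)
    (f : ℝ → ℝ) (hf : Measurable f) (I : ℝ) (hI0 : 0 < I)
    (hI : ∫⁻ t in Icc a b, ENNReal.ofReal (|f t| ^ p * w t) = ENNReal.ofReal I)
    (m : ℝ) (hm : 0 < m) (hmΦ : Φ m = 1 / 2) :
    ∫⁻ x in Icc a b, ENNReal.ofReal (Φ ((∫ t in x..b, f t) / (2 * m⁻¹ * τ * I ^ (1 / p))) * μ x)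
      ≤ 1 := by
  obtain ⟨hμm, hμ0, hμp⟩ := hμ
  obtain ⟨hwm, hwn, hwp⟩ := hw
  have hmono := oh_mono Φ hΦ
  have hcont : Continuous Φ := by
    rw [← continuousOn_univ]; exact hΦ.1.continuousOn isOpen_univ
  have hΦ0 := hΦ.2.2.1
  have hΦn := hΦ.2.2.2.1
  have hinvmono : ∀ s t, 0 ≤ s → s ≤ t → Φinv s ≤ Φinv t := by
    intro s t hs hst
    by_contra! hlt
    have := hmono (hinv.1 t (hs.trans hst)) (hinv.1 s hs) hlt.le
    rw [hinv.2.1 s hs, hinv.2.1 t (hs.trans hst)] at this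
    have : s = t := le_antisymm hst this
    rw [this] at hlt; exact lt_irrefl _ hlt
  have hUm : Measurable fun t => (U t).toReal := by
    rw [hUdef]; exact (oh_measL _ a).ennreal_toReal
  have hU0 : ∀ t ∈ Ioo a b, 0 < (U t).toReal := fun t ht => ENNReal.toReal_pos (hU t ht).1 (hU t ht).2
  have hψm : Measurable ψ := by
    have h1 : Measurable fun s => Φinv (max s 0) := Monotone.measurable fun s t hst =>
      hinvmono _ _ (le_max_right _ _) (max_le_max_right _ hst)
    have h2 : ψ = (fun s => Φinv (max s 0)) ∘ fun t => (U t).toReal ^ (-(1/2) : ℝ) := by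
      rw [hψdef]; funext t
      simp only [Function.comp]
      rw [max_eq_left (Real.rpow_nonneg ENNReal.toReal_nonneg _)]
    rw [h2]
    exact h1.comp (by fun_prop)
  have hanti : ∀ x ∈ Ioo a b, ∀ t ∈ Ioo x b, ψ t ≤ ψ x := by
    intro x hx t ht
    have ht' : t ∈ Ioo a b := ⟨hx.1.trans ht.1, ht.2⟩
    rw [hψdef]
    apply hinvmono _ _ (Real.rpow_nonneg ENNReal.toReal_nonneg _)
    apply Real.rpow_le_rpow_of_nonpos (hU0 x hx) _ (by norm_num)
    apply ENNReal.toReal_mono (hU t ht').2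
    rw [hUdef]
    exact lintegral_mono_set (Icc_subset_Icc_right ht.1.le)
  have hΦψ : ∀ t, Φ (ψ t) = (U t).toReal ^ (-(1/2) : ℝ) := fun t => by
    rw [hψdef]; exact hinv.2.1 _ (Real.rpow_nonneg ENNReal.toReal_nonneg _)
  set ν := (volume.restrict (Ioo a b)).withDensity
      (fun t => ENNReal.ofReal (|f t| ^ p * w t / I)) with hν
  have hνp : IsProbabilityMeasure ν := by
    constructor
    rw [hν, withDensity_apply _ MeasurableSet.univ, Measure.restrict_univ, restrict_Ioo_eq_restrict_Icc]
    have : ∀ t, ENNReal.ofReal (|f t| ^ p * w t / I) =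
        ENNReal.ofReal (|f t| ^ p * w t) * ENNReal.ofReal I⁻¹ := fun t => by
      rw [div_eq_mul_inv, ENNReal.ofReal_mul (by have := hwn t; positivity)]
    simp_rw [this]
    rw [lintegral_mul_const _ (by fun_prop), hI, ← ENNReal.ofReal_mul hI0.le,
      mul_inv_cancel₀ hI0.ne', ENNReal.ofReal_one]
  set c := 2 * m⁻¹ * τ * I ^ (1 / p) with hcdef
  have hc0 : 0 < c := by positivity
  have hwp' : ∀ᵐ t ∂(volume.restrict (Ioo a b)), 0 < w t :=
    ae_restrict_of_ae_restrict_of_subset Ioo_subset_Icc_self hwp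
  -- the kernel
  let k : ℝ → ℝ → ℝ≥0∞ := fun x t => (Ioi x).indicator (fun t => ENNReal.ofReal
    ((1/2) * (U t).toReal ^ (-(1/2) : ℝ))) t * (ENNReal.ofReal (μ x) *
      ENNReal.ofReal ((U x).toReal ^ (-(1/2) : ℝ)))
  have hpt : ∀ x ∈ Ioo a b, ENNReal.ofReal (Φ ((∫ t in x..b, f t) / c) * μ x) ≤ ∫⁻ t, k x t ∂ν := by
    intro x hx
    have hψx := hψ x hx
    have hss : Ioo x b ⊆ Ioo a b := Ioo_subset_Ioo_left hx.1.le
    have h1 := oh_point p pc hc f w hf hwm hwn a b x hx hwp' V hVdef hV ψ hψm hψ (hanti x hx) τ hτ0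
      hτ I hI0 ν hν m hm
    set G := (Ioo x b).indicator (fun t => m * ψ x * ψ t) with hG
    have hGm : Measurable G := Measurable.indicator (by fun_prop) measurableSet_Ioo
    have hG0 : ∀ t, 0 ≤ G t := fun t => indicator_nonneg (fun t ht => by
      have := hψ t (hss ht); positivity) t
    have hGB : ∀ t, G t ≤ m * ψ x * ψ x := fun t => by
      apply indicator_le' (fun t ht => ?_) (fun t _ => ?_)
      · have := hanti x hx t ht; gcongr
      · positivity
    have h2 := oh_jensen ν Φ hΦ p hc.lt hΛ G hGm _ hG0 hGB
    set J := ∫ t, G t ^ p ∂ν with hJ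
    have hJ0 : 0 ≤ J := integral_nonneg fun t => Real.rpow_nonneg (hG0 t) _
    have h3 : |∫ t in x..b, f t| ≤ c * J ^ (1 / p) := by
      have h3 : ENNReal.ofReal |∫ t in x..b, f t| ≤ ENNReal.ofReal (c * J ^ (1 / p)) := by
        refine le_trans ?_ h1
        rw [intervalIntegral.integral_of_le hx.2.le, ← Real.norm_eq_abs, ofReal_norm,
          integral_Ioc_eq_integral_Ioo]
        refine (enorm_integral_le_lintegral_enorm _).trans (le_of_eq ?_)
        congr 1; funext t
        rw [← ofReal_norm, Real.norm_eq_abs]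
      exact (ENNReal.ofReal_le_ofReal_iff (by positivity)).1 h3
    have h4 : Φ ((∫ t in x..b, f t) / c) ≤ Φ (J ^ (1 / p)) := by
      have e : Φ ((∫ t in x..b, f t) / c) = Φ (|∫ t in x..b, f t| / c) := by
        rcases abs_choice (∫ t in x..b, f t) with h | h
        · rw [h]
        · rw [h, neg_div, hΦ.2.1]
      rw [e]
      refine hmono (by simp only [mem_Ici]; positivity) (by simp only [mem_Ici]; positivity) ?_
      rw [div_le_iff₀ hc0, mul_comm]; exact h3
    have hμx := hμ0 x
    calc _ ≤ ENNReal.ofReal (Φ (J ^ (1 / p)) * μ x) := by gcongr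
      _ = ENNReal.ofReal (Φ (J ^ (1 / p))) * ENNReal.ofReal (μ x) := ENNReal.ofReal_mul (hΦn _)
      _ ≤ (∫⁻ t, ENNReal.ofReal (Φ (G t)) ∂ν) * ENNReal.ofReal (μ x) := by gcongr
      _ = ∫⁻ t, ENNReal.ofReal (Φ (G t)) * ENNReal.ofReal (μ x) ∂ν := by
        rw [lintegral_mul_const _ (by fun_prop)]
      _ ≤ _ := by
        apply lintegral_mono
        intro t
        by_cases ht : t ∈ Ioo x b
        · have hψt := hψ t (hss ht)
          have e1 : G t = m * ψ x * ψ t := indicator_of_mem ht _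
          have e2 : Φ (G t) ≤ (1/2) * (U t).toReal ^ (-(1/2) : ℝ) * (U x).toReal ^ (-(1/2) : ℝ) := by
            rw [e1]
            calc _ ≤ Φ (m * ψ x) * Φ (ψ t) := hsub _ _ (by positivity) hψt.le
              _ ≤ (Φ m * Φ (ψ x)) * Φ (ψ t) :=
                mul_le_mul_of_nonneg_right (hsub _ _ hm.le hψx.le) (hΦn _)
              _ = _ := by rw [hmΦ, hΦψ, hΦψ]; ring
          simp only [k]
          rw [indicator_of_mem (show t ∈ Ioi x from ht.1), ← ENNReal.ofReal_mul hμx,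
            ← ENNReal.ofReal_mul (hΦn _), ← ENNReal.ofReal_mul (by positivity)]
          apply ENNReal.ofReal_le_ofReal
          calc _ ≤ ((1/2) * (U t).toReal ^ (-(1/2) : ℝ) * (U x).toReal ^ (-(1/2) : ℝ)) * μ x := by gcongr
            _ = _ := by ring
        · have e1 : G t = 0 := indicator_of_notMem ht _
          simp [e1, hΦ0]
  have hkm : Measurable (Function.uncurry k) := by
    have hs : MeasurableSet {q : ℝ × ℝ | q.1 < q.2} := measurableSet_lt measurable_fst measurable_snd
    have : Function.uncurry k = fun q : ℝ × ℝ => ({q : ℝ × ℝ | q.1 < q.2}).indicator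
        (fun q => ENNReal.ofReal ((1/2) * (U q.2).toReal ^ (-(1/2) : ℝ))) q *
        (ENNReal.ofReal (μ q.1) * ENNReal.ofReal ((U q.1).toReal ^ (-(1/2) : ℝ))) := by
      funext q
      simp only [Function.uncurry, k, indicator, mem_Ioi, mem_ofPred_eq]
    rw [this]
    refine Measurable.mul (Measurable.indicator ?_ hs) ?_
    · exact (((hUm.comp measurable_snd).pow_const _).const_mul _).ennreal_ofReal
    · exact (hμm.comp measurable_fst).ennreal_ofReal.mul
        ((hUm.comp measurable_fst).pow_const _).ennreal_ofReal
  rw [← restrict_Ioo_eq_restrict_Icc]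
  calc _ ≤ ∫⁻ x in Ioo a b, ∫⁻ t, k x t ∂ν := setLIntegral_mono' measurableSet_Ioo hpt
    _ = ∫⁻ t, (∫⁻ x in Ioo a b, k x t) ∂ν := lintegral_lintegral_swap hkm.aemeasurable
    _ ≤ ∫⁻ t, 1 ∂ν := by
      apply lintegral_mono_ae
      have hac : ∀ᵐ t ∂ν, t ∈ Ioo a b :=
        (withDensity_absolutelyContinuous _ _).ae_le (ae_restrict_mem measurableSet_Ioo)
      filter_upwards [hac] with t ht
      have hUt := hU0 t ht
      have e : ∀ x, k x t = (Iio t).indicator (fun x => ENNReal.ofReal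
          ((1/2) * (U t).toReal ^ (-(1/2) : ℝ)) * (ENNReal.ofReal (μ x) *
          ENNReal.ofReal ((U x).toReal ^ (-(1/2) : ℝ)))) x := fun x => by
        simp only [k, indicator, mem_Ioi, mem_Iio]
        split_ifs <;> simp
      simp_rw [e]
      rw [lintegral_indicator measurableSet_Iio, Measure.restrict_restrict measurableSet_Iio]
      have hset : Iio t ∩ Ioo a b = Ioo a t := by
        ext y; constructor
        · rintro ⟨h1, h2⟩; exact ⟨h2.1, h1⟩
        · rintro ⟨h1, h2⟩; exact ⟨h2, h1, h2.trans ht.2⟩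
      rw [hset, lintegral_const_mul _ (by fun_prop)]
      have h5 := oh_intL (fun s => ENNReal.ofReal (μ s)) (by fun_prop) a t
        (by have := (hU t ht).2; rw [hUdef] at this; exact this)
      have h5' : ∫⁻ x in Ioo a t, ENNReal.ofReal (μ x) * ENNReal.ofReal ((U x).toReal ^ (-(1/2) : ℝ))
          ≤ ENNReal.ofReal (2 * (U t).toReal ^ (1/2 : ℝ)) := by
        rw [hUdef]; exact h5
      calc _ ≤ ENNReal.ofReal ((1/2) * (U t).toReal ^ (-(1/2) : ℝ)) *
            ENNReal.ofReal (2 * (U t).toReal ^ (1/2 : ℝ)) := by gcongr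
        _ = 1 := by
          rw [← ENNReal.ofReal_mul (by positivity), Real.rpow_neg hUt.le]
          have : (U t).toReal ^ (1/2:ℝ) ≠ 0 := by positivity
          rw [← ENNReal.ofReal_one]; congr 1
          field_simp
    _ = 1 := by simp

/-- Orlicz–Hardy inequality for `x ↦ ∫ₓ^b f`: if `T < ∞` then
`‖∫_•^b f‖_{L_μ^Φ[a,b]} ≤ C₀(Φ) T ‖f‖_{L_w^p[a,b]}`. -/
theorem orlicz_hardy_right
    (a b : ℝ) (hab : a < b) (p pc : ℝ) (hp : 1 < p) (hpc : pc = p / (p - 1))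
    (Φ Φinv μ w : ℝ → ℝ)
    (hΦ : IsYoung Φ) (hsub : Submult Φ) (hinv : IsYoungInv Φ Φinv)
    (hΛ : ConvexOn ℝ Set.univ (fun t => Φ (|t| ^ (1 / p))))
    (hμ : IsWeight μ a b) (hw : IsWeight w a b)
    (T : ℝ≥0∞)
    (hT : T = ⨆ x ∈ Set.Ioo a b,
      ((ENNReal.ofReal (Φinv ((wInt μ a x).toReal ^ (-(1/2) : ℝ)))) ^ 2)⁻¹ *
        (∫⁻ t in Set.Icc x b, ENNReal.ofReal (w t ^ (1 - pc))) ^ (1 / pc))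
    (hTfin : T < ⊤) :
    ∀ f : ℝ → ℝ, Measurable f →
      (∫⁻ t in Set.Icc a b, ENNReal.ofReal (|f t| ^ p * w t)) < ⊤ →
      luxNorm Φ μ a b (fun x => ∫ t in x..b, f t)
        ≤ ENNReal.ofReal (2 * (Φinv (1/2))⁻¹) * T * lpNorm w p a b f := by
  intro f hf hIfin
  have hp0 : 0 < p := by linarith
  have hc : p.HolderConjugate pc := by
    rw [hpc]; exact Real.HolderConjugate.conjExponent hp
  have hpc0 := hc.symm.pos
  obtain ⟨hμm, hμ0, hμp⟩ := id hμ
  obtain ⟨hwm, hwn, hwp⟩ := id hw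
  have hΦ0 := hΦ.2.2.1
  set m := Φinv (1/2) with hmdef
  have hmΦ : Φ m = 1/2 := hinv.2.1 _ (by norm_num)
  have hm : 0 < m := by
    refine lt_of_le_of_ne (hinv.1 _ (by norm_num)) fun h => ?_
    rw [← h, hΦ0] at hmΦ; norm_num at hmΦ
  by_cases hI0 : (∫⁻ t in Set.Icc a b, ENNReal.ofReal (|f t| ^ p * w t)) = 0
  · -- `f = 0` a.e.
    have hf0 : ∀ᵐ t ∂(volume.restrict (Icc a b)), f t = 0 := by
      rw [lintegral_eq_zero_iff (by fun_prop)] at hI0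
      filter_upwards [hI0, hwp] with t h1 h2
      simp only [Pi.zero_apply, ENNReal.ofReal_eq_zero] at h1
      by_contra h3
      have : 0 < |f t| ^ p * w t := by
        have := abs_pos.2 h3
        positivity
      linarith
    have hz : luxNorm Φ μ a b (fun x => ∫ t in x..b, f t) = 0 := by
      refine le_antisymm (ENNReal.le_of_forall_pos_le_add fun ε hε _ => ?_) zero_le
      rw [zero_add]
      refine sInf_le ⟨ε, hε, by simp, ?_⟩
      have : ∫⁻ x in Icc a b, ENNReal.ofReal (Φ ((∫ t in x..b, f t) / ε) * μ x) =
          ∫⁻ x in Icc a b, 0 := by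
        apply setLIntegral_congr_fun measurableSet_Icc
        intro x hx
        have : ∫ t in x..b, f t = 0 := by
          rw [intervalIntegral.integral_of_le hx.2]
          apply integral_eq_zero_of_ae
          exact ae_restrict_of_ae_restrict_of_subset
            (Ioc_subset_Icc_self.trans (Icc_subset_Icc_left hx.1)) hf0
        simp [this, hΦ0]
      rw [this]; simp
    rw [hz]; exact zero_le
  let U : ℝ → ℝ≥0∞ := fun t => ∫⁻ s in Icc a t, ENNReal.ofReal (μ s)
  let V : ℝ → ℝ≥0∞ := fun t => ∫⁻ s in Icc t b, ENNReal.ofReal (w s ^ (1 - pc))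
  let ψ : ℝ → ℝ := fun t => Φinv ((U t).toReal ^ (-(1/2) : ℝ))
  have hle : ∀ t ∈ Ioo a b, ((ENNReal.ofReal (ψ t)) ^ 2)⁻¹ * V t ^ (1 / pc) ≤ T := by
    intro t ht
    rw [hT]
    exact le_iSup₂_of_le t ht le_rfl
  have hVne : ∀ t ∈ Ioo a b, V t ≠ 0 := by
    intro t ht
    apply oh_pos (fun s => w s ^ (1 - pc)) (by fun_prop)
    · have := ae_restrict_of_ae_restrict_of_subset (Icc_subset_Icc_left ht.1.le) hwp
      filter_upwards [this] with s hs
      positivity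
    · simp [ht.2]
  have hUne : ∀ t ∈ Ioo a b, U t ≠ 0 := by
    intro t ht
    apply oh_pos μ hμm
    · exact ae_restrict_of_ae_restrict_of_subset (Icc_subset_Icc_right ht.2.le) hμp
    · simp [ht.1]
  have hVp : ∀ t ∈ Ioo a b, V t ^ (1 / pc) ≠ 0 := by
    intro t ht
    rw [Ne, ENNReal.rpow_eq_zero_iff]
    rintro (⟨h, -⟩ | ⟨-, h⟩)
    · exact hVne t ht h
    · have : 0 < 1 / pc := by positivity
      linarith
  have hψne : ∀ t ∈ Ioo a b, 0 < ψ t := by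
    intro t ht
    by_contra! hle0
    have := hle t ht
    rw [ENNReal.ofReal_of_nonpos hle0] at this
    simp only [ne_eq, OfNat.ofNat_ne_zero, not_false_eq_true, zero_pow, ENNReal.inv_zero] at this
    rw [ENNReal.top_mul (hVp t ht)] at this
    exact absurd hTfin (not_lt.2 this)
  have hUtop : ∀ t ∈ Ioo a b, U t ≠ ⊤ := by
    intro t ht h
    have h1 := hψne t ht
    simp only [ψ] at h1
    rw [h, ENNReal.toReal_top, Real.zero_rpow (by norm_num)] at h1
    have := hinv.2.2 0 le_rfl
    rw [hΦ0] at this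
    rw [this] at h1
    exact lt_irrefl _ h1
  have hVtop' : ∀ t ∈ Ioo a b, V t ^ (1 / pc) ≤ T * ENNReal.ofReal (ψ t) ^ 2 := by
    intro t ht
    have h1 := hle t ht
    have h2 : ENNReal.ofReal (ψ t) ^ 2 ≠ 0 := by
      have := hψne t ht
      simp [this]
    have h3 : ENNReal.ofReal (ψ t) ^ 2 ≠ ⊤ := by simp
    rw [mul_comm, ← div_eq_mul_inv, ENNReal.div_le_iff h2 h3] at h1
    exact h1
  have hVtop : ∀ t ∈ Ioo a b, V t ≠ ⊤ := by
    intro t ht h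
    have h1 := hVtop' t ht
    rw [h, ENNReal.top_rpow_of_pos (by positivity)] at h1
    exact absurd (ENNReal.mul_lt_top hTfin (by simp)) (not_lt.2 h1)
  have hτ : ∀ t ∈ Ioo a b, (V t).toReal ^ (1 / pc) ≤ T.toReal * ψ t ^ 2 := by
    intro t ht
    have h1 := ENNReal.toReal_mono (ENNReal.mul_ne_top hTfin.ne (by simp)) (hVtop' t ht)
    rw [← ENNReal.toReal_rpow, ENNReal.toReal_mul, ENNReal.toReal_pow,
      ENNReal.toReal_ofReal (hψne t ht).le] at h1
    exact h1
  have hτ0 : 0 < T.toReal := by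
    obtain ⟨t, ht⟩ := nonempty_Ioo.2 hab
    have h1 := hτ t ht
    have h2 : 0 < (V t).toReal := ENNReal.toReal_pos (hVne t ht) (hVtop t ht)
    have h3 : 0 < T.toReal * ψ t ^ 2 := lt_of_lt_of_le (by positivity) h1
    exact pos_of_mul_pos_left h3 (by positivity)
  set I := (∫⁻ t in Set.Icc a b, ENNReal.ofReal (|f t| ^ p * w t)).toReal with hI
  have hIpos : 0 < I := ENNReal.toReal_pos hI0 hIfin.ne
  have hIe : ∫⁻ t in Set.Icc a b, ENNReal.ofReal (|f t| ^ p * w t) = ENNReal.ofReal I :=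
    (ENNReal.ofReal_toReal hIfin.ne).symm
  have key := oh_main a b p pc hc Φ Φinv μ w hΦ hsub hinv hΛ hμ hw T.toReal hτ0 U V rfl rfl
    (fun t ht => ⟨hUne t ht, hUtop t ht⟩) (fun t ht => ⟨hVne t ht, hVtop t ht⟩) ψ rfl hψne hτ
    f hf I hIpos hIe m hm hmΦ
  refine sInf_le ⟨2 * m⁻¹ * T.toReal * I ^ (1 / p), by positivity, ?_, key⟩
  rw [_root_.lpNorm, hIe, ENNReal.ofReal_rpow_of_pos hIpos,
    ENNReal.ofReal_mul (p := 2 * m⁻¹ * T.toReal) (by positivity),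
    ENNReal.ofReal_mul (p := 2 * m⁻¹) (by positivity), ENNReal.ofReal_toReal hTfin.ne]
end
end

section
/- Let -∞ < a < b < ∞, 1 < p < ∞ with conjugate exponent p' = p/(p−1), let μ, w and τ be weights on [a,b], and let Φ be a Young function that is submultiplicative and invertible on [0,∞) such that Λ(t) = Φ(t^{1/p}) is convex. Define S(p,Φ,μ,τ,w) := sup_{a<x<b} { [Φ^{-1}(μ[x,b]^{-1/2})]^{-2} · (∫_a^x τ(t)^{p'} w(t)^{1−p'} dt)^{1/p'} }. If S(p,Φ,μ,τ,w) < ∞, then for every f ∈ L_w^p[a,b], ‖ x ↦ ∫_a^x f(t) τ(t) dt ‖_{L_μ^Φ[a,b]} ≤ C₀(Φ) · S(p,Φ,μ,τ,w) · ‖f‖_{L_w^p[a,b]}, where C₀(Φ) := 2·[Φ^{-1}(1/2)]^{-1}. -/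
open MeasureTheory Set Filter
open scoped ENNReal NNReal

noncomputable section

lemma layer (ν : Measure ℝ) (G : ℝ → ℝ) (hG : Measurable G) (hG0 : ∀ t, 0 ≤ G t) (M : ℝ)
    (hM : 0 < M) (hνM : ν univ ≤ ENNReal.ofReal M)
    (h : ∀ s, 0 < s → ν {t | G t < s} ≤ ENNReal.ofReal s) :
    ∫⁻ t, ENNReal.ofReal (G t ^ (-(1/2) : ℝ)) ∂ν ≤ ENNReal.ofReal (2 * M ^ (1/2 : ℝ)) := by
  rw [lintegral_eq_lintegral_meas_lt ν (Eventually.of_forall fun t => Real.rpow_nonneg (hG0 t) _)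
    (hG.pow_const _).aemeasurable]
  set R : ℝ := M ^ (-(1/2) : ℝ) with hR
  have hRpos : 0 < R := Real.rpow_pos_of_pos hM _
  have hsplit : Ioi (0:ℝ) = Ioc 0 R ∪ Ioi R := (Ioc_union_Ioi_eq_Ioi hRpos.le).symm
  rw [hsplit]
  refine (lintegral_union_le _ _ _).trans ?_
  have h1 : ∫⁻ t in Ioc 0 R, ν {a | t < G a ^ (-(1/2) : ℝ)} ≤ ENNReal.ofReal (M ^ (1/2 : ℝ)) := by
    calc ∫⁻ t in Ioc 0 R, ν {a | t < G a ^ (-(1/2) : ℝ)}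
        ≤ ∫⁻ t in Ioc 0 R, ENNReal.ofReal M :=
          lintegral_mono fun t => (measure_mono (subset_univ _)).trans hνM
      _ = ENNReal.ofReal (M ^ (1/2 : ℝ)) := by
          rw [setLIntegral_const, Real.volume_Ioc, ← ENNReal.ofReal_mul hM.le]
          congr 1
          rw [sub_zero, hR]
          nth_rewrite 1 [← Real.rpow_one M]
          rw [← Real.rpow_add hM]; norm_num
  have h2 : ∫⁻ t in Ioi R, ν {a | t < G a ^ (-(1/2) : ℝ)} ≤ ENNReal.ofReal (M ^ (1/2 : ℝ)) := by
    calc ∫⁻ t in Ioi R, ν {a | t < G a ^ (-(1/2) : ℝ)}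
        ≤ ∫⁻ t in Ioi R, ENNReal.ofReal (t ^ (-2 : ℝ)) := by
          refine setLIntegral_mono' measurableSet_Ioi fun t ht => ?_
          have ht0 : 0 < t := hRpos.trans ht
          refine (measure_mono ?_).trans (h _ (Real.rpow_pos_of_pos ht0 _))
          intro y hy
          simp only [mem_ofPred_eq] at hy ⊢
          have hy0 : 0 < G y := by
            rcases (hG0 y).lt_or_eq with h | h
            · exact h
            · rw [← h, Real.zero_rpow (by norm_num)] at hy; linarith
          have := Real.rpow_lt_rpow_of_neg ht0 hy (show (-2:ℝ) < 0 by norm_num)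
          rwa [← Real.rpow_mul hy0.le, show (-(1/2) * -2 : ℝ) = 1 by norm_num, Real.rpow_one] at this
      _ = ENNReal.ofReal (M ^ (1/2 : ℝ)) := by
          rw [← ofReal_integral_eq_lintegral_ofReal
            (integrableOn_Ioi_rpow_of_lt (by norm_num) hRpos)
            ((ae_restrict_mem measurableSet_Ioi).mono fun t ht =>
              Real.rpow_nonneg (hRpos.trans ht).le _),
            integral_Ioi_rpow_of_lt (by norm_num) hRpos, hR, ← Real.rpow_mul hM.le]
          norm_num
  refine (add_le_add h1 h2).trans (le_of_eq ?_)
  rw [← ENNReal.ofReal_add (by positivity) (by positivity)]; ring_nf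

lemma layer_left (ν : Measure ℝ) [IsFiniteMeasure ν] (hν : ν ≠ 0) :
    ∫⁻ t, ENNReal.ofReal ((ν (Iic t)).toReal ^ (-(1/2) : ℝ)) ∂ν
      ≤ ENNReal.ofReal (2 * (ν univ).toReal ^ (1/2 : ℝ)) := by
  have hm : Monotone fun t => (ν (Iic t)).toReal := fun s t hst =>
    ENNReal.toReal_mono (measure_ne_top _ _) (measure_mono (Iic_subset_Iic.2 hst))
  refine layer ν _ hm.measurable (fun t => ENNReal.toReal_nonneg) _
    (ENNReal.toReal_pos (by simpa using hν) (measure_ne_top _ _))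
    (ENNReal.ofReal_toReal (measure_ne_top _ _)).ge fun s hs => ?_
  have hms : MeasurableSet {t | (ν (Iic t)).toReal < s} := hm.measurable measurableSet_Iio
  rw [hms.measure_eq_iSup_isCompact]
  refine iSup₂_le fun K hK => iSup_le fun hKc => ?_
  rcases K.eq_empty_or_nonempty with rfl | hne
  · simp
  obtain ⟨t, ht, hmax⟩ := hKc.exists_isGreatest hne
  have hKt : K ⊆ Iic t := fun y hy => hmax hy
  refine (measure_mono hKt).trans ?_
  rw [← ENNReal.ofReal_toReal (measure_ne_top ν (Iic t))]
  exact ENNReal.ofReal_le_ofReal (le_of_lt (hK ht))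

lemma layer_right (ν : Measure ℝ) [IsFiniteMeasure ν] (hν : ν ≠ 0) :
    ∫⁻ t, ENNReal.ofReal ((ν (Ici t)).toReal ^ (-(1/2) : ℝ)) ∂ν
      ≤ ENNReal.ofReal (2 * (ν univ).toReal ^ (1/2 : ℝ)) := by
  have hm : Antitone fun t => (ν (Ici t)).toReal := fun s t hst =>
    ENNReal.toReal_mono (measure_ne_top _ _) (measure_mono (Ici_subset_Ici.2 hst))
  refine layer ν _ hm.measurable (fun t => ENNReal.toReal_nonneg) _
    (ENNReal.toReal_pos (by simpa using hν) (measure_ne_top _ _))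
    (ENNReal.ofReal_toReal (measure_ne_top _ _)).ge fun s hs => ?_
  have hms : MeasurableSet {t | (ν (Ici t)).toReal < s} := hm.measurable measurableSet_Iio
  rw [hms.measure_eq_iSup_isCompact]
  refine iSup₂_le fun K hK => iSup_le fun hKc => ?_
  rcases K.eq_empty_or_nonempty with rfl | hne
  · simp
  obtain ⟨t, ht, hmax⟩ := hKc.exists_isLeast hne
  have hKt : K ⊆ Ici t := fun y hy => hmax hy
  refine (measure_mono hKt).trans ?_
  rw [← ENNReal.ofReal_toReal (measure_ne_top ν (Ici t))]
  exact ENNReal.ofReal_le_ofReal (le_of_lt (hK ht))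

lemma dens_left (h : ℝ → ℝ≥0∞) (hh : Measurable h) (a x : ℝ)
    (hfin : ∫⁻ t in Icc a x, h t ≠ ⊤) (hpos : ∫⁻ t in Icc a x, h t ≠ 0) :
    ∫⁻ t in Icc a x, h t * ENNReal.ofReal ((∫⁻ u in Icc a t, h u).toReal ^ (-(1/2) : ℝ))
      ≤ ENNReal.ofReal (2 * (∫⁻ t in Icc a x, h t).toReal ^ (1/2 : ℝ)) := by
  set ν := (volume.restrict (Icc a x)).withDensity h with hνdef
  have hu : ν univ = ∫⁻ t in Icc a x, h t := by simp [hνdef]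
  have : IsFiniteMeasure ν := ⟨by rw [hu]; exact hfin.lt_top⟩
  have hν : ν ≠ 0 := by rw [← Measure.measure_univ_ne_zero, hu]; exact hpos
  have key := layer_left ν hν
  have hm : Monotone fun t => (ν (Iic t)).toReal := fun s t hst =>
    ENNReal.toReal_mono (measure_ne_top _ _) (measure_mono (Iic_subset_Iic.2 hst))
  rw [hu] at key
  refine le_trans (le_of_eq ?_) key
  rw [hνdef, lintegral_withDensity_eq_lintegral_mul _ hh
    (hm.measurable.pow_const _).ennreal_ofReal]
  refine setLIntegral_congr_fun measurableSet_Icc fun t ht => ?_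
  have : ν (Iic t) = ∫⁻ u in Icc a t, h u := by
    rw [hνdef, withDensity_apply _ measurableSet_Iic, Measure.restrict_restrict measurableSet_Iic]
    congr 2
    ext y; simp only [mem_inter_iff, mem_Iic, mem_Icc]
    exact ⟨fun h => ⟨h.2.1, h.1⟩, fun h => ⟨h.2, h.1, h.2.trans ht.2⟩⟩
  simp [this]

lemma dens_right (h : ℝ → ℝ≥0∞) (hh : Measurable h) (x b : ℝ)
    (hfin : ∫⁻ t in Icc x b, h t ≠ ⊤) (hpos : ∫⁻ t in Icc x b, h t ≠ 0) :
    ∫⁻ t in Icc x b, h t * ENNReal.ofReal ((∫⁻ u in Icc t b, h u).toReal ^ (-(1/2) : ℝ))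
      ≤ ENNReal.ofReal (2 * (∫⁻ t in Icc x b, h t).toReal ^ (1/2 : ℝ)) := by
  set ν := (volume.restrict (Icc x b)).withDensity h with hνdef
  have hu : ν univ = ∫⁻ t in Icc x b, h t := by simp [hνdef]
  have : IsFiniteMeasure ν := ⟨by rw [hu]; exact hfin.lt_top⟩
  have hν : ν ≠ 0 := by rw [← Measure.measure_univ_ne_zero, hu]; exact hpos
  have key := layer_right ν hν
  have hm : Antitone fun t => (ν (Ici t)).toReal := fun s t hst =>
    ENNReal.toReal_mono (measure_ne_top _ _) (measure_mono (Ici_subset_Ici.2 hst))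
  rw [hu] at key
  refine le_trans (le_of_eq ?_) key
  rw [hνdef, lintegral_withDensity_eq_lintegral_mul _ hh
    (hm.measurable.pow_const _).ennreal_ofReal]
  refine setLIntegral_congr_fun measurableSet_Icc fun t ht => ?_
  have : ν (Ici t) = ∫⁻ u in Icc t b, h u := by
    rw [hνdef, withDensity_apply _ measurableSet_Ici, Measure.restrict_restrict measurableSet_Ici]
    congr 2
    ext y; simp only [mem_inter_iff, mem_Ici, mem_Icc]
    exact ⟨fun h => ⟨h.1, h.2.2⟩, fun h => ⟨h.1, ht.1.trans h.1, h.2⟩⟩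
  simp [this]

lemma hardy_pointwise (a x p pc : ℝ) (hax : a < x) (hpq : p.HolderConjugate pc)
    (f w τ ψ : ℝ → ℝ) (hf : Measurable f) (hw : Measurable w) (hτ : Measurable τ)
    (hψ : Measurable ψ) (hτ0 : ∀ t, 0 ≤ τ t)
    (hwpos : ∀ᵐ t ∂(volume.restrict (Ioc a x)), 0 < w t) (s : ℝ) (hs : 0 < s)
    (hψpos : ∀ t ∈ Ioc a x, 0 < ψ t)
    (hVfin : ∀ t ∈ Ioc a x, ∫⁻ u in Icc a t, ENNReal.ofReal (τ u ^ pc * w u ^ (1 - pc)) ≠ ⊤)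
    (hVpos : ∀ t ∈ Ioc a x, ∫⁻ u in Icc a t, ENNReal.ofReal (τ u ^ pc * w u ^ (1 - pc)) ≠ 0)
    (hV : ∀ t ∈ Ioc a x,
      (∫⁻ u in Icc a t, ENNReal.ofReal (τ u ^ pc * w u ^ (1 - pc))).toReal ^ (1 / pc)
        ≤ s * ψ t ^ 2) :
    ENNReal.ofReal |∫ t in a..x, f t * τ t| ≤ ENNReal.ofReal (2 * s * ψ x) *
      (∫⁻ t in Ioc a x, ENNReal.ofReal (|f t| ^ p * w t * ψ t ^ p)) ^ (1 / p) := by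
  have hp1 := hpq.lt
  have hp0 := hpq.pos
  have hq0 := hpq.symm.pos
  have hq1 := hpq.symm.lt
  have hxx : x ∈ Ioc a x := ⟨hax, le_rfl⟩
  set σ : ℝ → ℝ≥0∞ := fun u => ENNReal.ofReal (τ u ^ pc * w u ^ (1 - pc)) with hσ
  have hσm : Measurable σ := ((hτ.pow_const _).mul (hw.pow_const _)).ennreal_ofReal
  set V : ℝ → ℝ := fun t => (∫⁻ u in Icc a t, σ u).toReal with hVdef
  have hVp : ∀ t ∈ Ioc a x, 0 < V t := fun t ht => ENNReal.toReal_pos (hVpos t ht) (hVfin t ht)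
  set F : ℝ → ℝ≥0∞ := fun t => ENNReal.ofReal (|f t| * w t ^ (1/p) * ψ t) with hF
  set G : ℝ → ℝ≥0∞ := fun t => ENNReal.ofReal (τ t * w t ^ (-(1/p)) * (ψ t)⁻¹) with hG
  have hFm : Measurable F :=
    ((hf.abs.mul (hw.pow_const _)).mul hψ).ennreal_ofReal
  have hGm : Measurable G := ((hτ.mul (hw.pow_const _)).mul hψ.inv).ennreal_ofReal
  have hmem : ∀ᵐ t ∂(volume.restrict (Ioc a x)), t ∈ Ioc a x := ae_restrict_mem measurableSet_Ioc
  have h1 : ENNReal.ofReal |∫ t in a..x, f t * τ t| ≤ ∫⁻ t in Ioc a x, (F * G) t := by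
    rw [intervalIntegral.integral_of_le hax.le, ← Real.enorm_eq_ofReal_abs]
    refine (enorm_integral_le_lintegral_enorm _).trans (le_of_eq (lintegral_congr_ae ?_))
    filter_upwards [hmem, hwpos] with t ht hwt
    have hψt := hψpos t ht
    simp only [hF, hG, Pi.mul_apply]
    rw [Real.enorm_eq_ofReal_abs, ← ENNReal.ofReal_mul (by positivity), abs_mul,
      abs_of_nonneg (hτ0 t), Real.rpow_neg hwt.le]
    have : w t ^ (1/p) ≠ 0 := (Real.rpow_pos_of_pos hwt _).ne'
    congr 1
    field_simp
  have h2 : ∫⁻ t in Ioc a x, F t ^ p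
      = ∫⁻ t in Ioc a x, ENNReal.ofReal (|f t| ^ p * w t * ψ t ^ p) := by
    refine lintegral_congr_ae ?_
    filter_upwards [hmem, hwpos] with t ht hwt
    have hψt := hψpos t ht
    simp only [hF]
    rw [ENNReal.ofReal_rpow_of_nonneg (by positivity) hp0.le,
      Real.mul_rpow (by positivity) hψt.le, Real.mul_rpow (abs_nonneg _) (by positivity),
      ← Real.rpow_mul hwt.le, one_div_mul_cancel hp0.ne', Real.rpow_one]
  have h3 : ∫⁻ t in Ioc a x, G t ^ pc
      ≤ ENNReal.ofReal (s ^ (pc / 2)) * ENNReal.ofReal (2 * V x ^ (1/2 : ℝ)) := by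
    calc ∫⁻ t in Ioc a x, G t ^ pc
        ≤ ∫⁻ t in Ioc a x, ENNReal.ofReal (s ^ (pc / 2)) *
            (σ t * ENNReal.ofReal (V t ^ (-(1/2) : ℝ))) := by
          refine lintegral_mono_ae ?_
          filter_upwards [hmem, hwpos] with t ht hwt
          have hψt := hψpos t ht
          have hVt := hVp t ht
          simp only [hG, hσ]
          have hτt := hτ0 t
          rw [ENNReal.ofReal_rpow_of_nonneg (by positivity) hq0.le,
            ← ENNReal.ofReal_mul (by positivity), ← ENNReal.ofReal_mul (by positivity)]
          refine ENNReal.ofReal_le_ofReal ?_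
          rw [Real.mul_rpow (by positivity) (by positivity), Real.mul_rpow hτt (by positivity),
            ← Real.rpow_mul hwt.le]
          have e1 : -(1/p) * pc = 1 - pc := by
            have := hpq.inv_add_inv_eq_one
            field_simp at this ⊢; linarith
          rw [e1]
          have key : (ψ t)⁻¹ ^ pc ≤ s ^ (pc/2) * V t ^ (-(1/2) : ℝ) := by
            have h := Real.rpow_le_rpow (by positivity) (hV t ht) (show 0 ≤ pc/2 by positivity)
            change (V t ^ (1/pc)) ^ (pc/2) ≤ _ at h
            rw [← Real.rpow_mul hVt.le, Real.mul_rpow hs.le (by positivity), ← Real.rpow_natCast,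
              ← Real.rpow_mul hψt.le] at h
            have e2 : 1 / pc * (pc/2) = 1/2 := by field_simp
            have e3 : ((2:ℕ):ℝ) * (pc/2) = pc := by push_cast; ring
            rw [e2, e3] at h
            rw [Real.inv_rpow hψt.le, Real.rpow_neg hVt.le, ← div_eq_mul_inv, inv_eq_one_div,
              div_le_div_iff₀ (by positivity) (by positivity)]
            linarith
          calc _ ≤ (τ t ^ pc * w t ^ (1 - pc)) * (s ^ (pc/2) * V t ^ (-(1/2) : ℝ)) := by gcongr
            _ = _ := by ring
      _ ≤ ∫⁻ t in Icc a x, ENNReal.ofReal (s ^ (pc / 2)) *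
            (σ t * ENNReal.ofReal (V t ^ (-(1/2) : ℝ))) := lintegral_mono_set Ioc_subset_Icc_self
      _ = ENNReal.ofReal (s ^ (pc / 2)) * ∫⁻ t in Icc a x,
            (σ t * ENNReal.ofReal (V t ^ (-(1/2) : ℝ))) :=
          lintegral_const_mul' _ _ ENNReal.ofReal_ne_top
      _ ≤ _ := by
          gcongr
          exact dens_left σ hσm a x (hVfin x hxx) (hVpos x hxx)
  have h4 : (∫⁻ t in Ioc a x, G t ^ pc) ^ (1/pc) ≤ ENNReal.ofReal (2 * s * ψ x) := by
    refine (ENNReal.rpow_le_rpow h3 (by positivity)).trans ?_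
    have hVx := hVp x hxx
    have hψx := hψpos x hxx
    rw [← ENNReal.ofReal_mul (by positivity), ENNReal.ofReal_rpow_of_nonneg (by positivity)
      (by positivity)]
    refine ENNReal.ofReal_le_ofReal ?_
    rw [Real.mul_rpow (by positivity) (by positivity), Real.mul_rpow (by positivity) (by positivity),
      ← Real.rpow_mul hs.le, ← Real.rpow_mul hVx.le]
    have e1 : pc / 2 * (1/pc) = 1/2 := by field_simp
    have e2 : (1/2 : ℝ) * (1/pc) = (1/pc) * (1/2) := by ring
    rw [e1, e2, Real.rpow_mul hVx.le]
    have h := Real.rpow_le_rpow (by positivity) (hV x hxx) (show (0:ℝ) ≤ 1/2 by positivity)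
    change (V x ^ (1/pc)) ^ (1/2 : ℝ) ≤ _ at h
    have hsq : (s * ψ x ^ 2) ^ (1/2 : ℝ) = s ^ (1/2 : ℝ) * ψ x := by
      rw [Real.mul_rpow hs.le (by positivity), ← Real.sqrt_eq_rpow (ψ x ^ 2), Real.sqrt_sq hψx.le]
    rw [hsq] at h
    have h2' : (2:ℝ) ^ (1/pc) ≤ 2 := by
      calc (2:ℝ) ^ (1/pc) ≤ 2 ^ (1:ℝ) := by
            apply Real.rpow_le_rpow_of_exponent_le (by norm_num)
            rw [div_le_one hq0]; exact hq1.le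
        _ = 2 := Real.rpow_one 2
    calc s ^ (1/2 : ℝ) * (2 ^ (1/pc) * (V x ^ (1/pc)) ^ (1/2 : ℝ))
        ≤ s ^ (1/2 : ℝ) * (2 * (s ^ (1/2 : ℝ) * ψ x)) := by gcongr
      _ = 2 * (s ^ (1/2 : ℝ) * s ^ (1/2 : ℝ)) * ψ x := by ring
      _ = 2 * s * ψ x := by
          rw [← Real.rpow_add hs]; norm_num
  refine h1.trans ((ENNReal.lintegral_mul_le_Lp_mul_Lq _ hpq hFm.aemeasurable
    hGm.aemeasurable).trans ?_)
  rw [h2, mul_comm]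
  gcongr

lemma jensen_step (a b p κ x y : ℝ) (hp : 0 < p) (hx : x ∈ Ioo a b) (Φ ψ : ℝ → ℝ)
    (ν : Measure ℝ) [IsProbabilityMeasure ν] (hν : ∀ᵐ t ∂ν, t ∈ Ioo a b)
    (hψ : Measurable ψ) (hψpos : ∀ t ∈ Ioo a b, 0 < ψ t) (hψmono : MonotoneOn ψ (Ioo a b))
    (hκ : 0 < κ) (hy : 0 ≤ y) (hΦmono : ∀ s t, 0 ≤ s → s ≤ t → Φ s ≤ Φ t) (hΦ0 : Φ 0 = 0)
    (hΦnn : ∀ t, 0 ≤ Φ t)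
    (hΛ : ConvexOn ℝ Set.univ (fun t => Φ (|t| ^ (1 / p))))
    (hyle : ENNReal.ofReal y ≤
      (∫⁻ t, ENNReal.ofReal (if t ≤ x then (κ * ψ x * ψ t) ^ p else 0) ∂ν) ^ (1 / p)) :
    ENNReal.ofReal (Φ y) ≤
      ∫⁻ t, ENNReal.ofReal (if t ≤ x then Φ (κ * ψ x * ψ t) else 0) ∂ν := by
  set g : ℝ → ℝ := fun t => if t ≤ x then (κ * ψ x * ψ t) ^ p else 0 with hg
  set Λ : ℝ → ℝ := fun t => Φ (|t| ^ (1 / p)) with hΛdef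
  have hψx := hψpos x hx
  have hgm : Measurable g :=
    Measurable.ite measurableSet_Iic ((hψ.const_mul _).pow_const _) measurable_const
  have hg0 : ∀ᵐ t ∂ν, 0 ≤ g t := by
    filter_upwards [hν] with t ht
    have := hψpos t ht
    simp only [hg]; split_ifs <;> positivity
  set B : ℝ := (κ * ψ x * ψ x) ^ p with hB
  have hB0 : 0 ≤ B := by positivity
  have hgB : ∀ᵐ t ∂ν, g t ≤ B := by
    filter_upwards [hν] with t ht
    have := hψpos t ht
    simp only [hg]; split_ifs with h
    · have := hψmono ht hx h
      simp only [hB]; gcongr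
    · exact hB0
  have hgint : Integrable g ν := by
    refine Integrable.of_bound hgm.aestronglyMeasurable B ?_
    filter_upwards [hg0, hgB] with t h0 h1
    rw [Real.norm_eq_abs, abs_of_nonneg h0]; exact h1
  have hΛc : Continuous Λ := continuousOn_univ.1 (hΛ.continuousOn isOpen_univ)
  have hΛg : Integrable (Λ ∘ g) ν := by
    refine Integrable.of_bound (hΛc.measurable.comp hgm).aestronglyMeasurable (Λ B) ?_
    filter_upwards [hg0, hgB] with t h0 h1
    rw [Real.norm_eq_abs, abs_of_nonneg (show 0 ≤ (Λ ∘ g) t from hΦnn _)]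
    refine hΦmono _ _ (by positivity) ?_
    rw [abs_of_nonneg h0, abs_of_nonneg hB0]
    gcongr
  have hI0 : 0 ≤ ∫ t, g t ∂ν := integral_nonneg_of_ae hg0
  have hj := hΛ.map_integral_le hΛc.continuousOn isClosed_univ (by simp) hgint hΛg
  have h1 : y ≤ (∫ t, g t ∂ν) ^ (1/p) := by
    rw [← ofReal_integral_eq_lintegral_ofReal hgint hg0,
      ENNReal.ofReal_rpow_of_nonneg hI0 (by positivity)] at hyle
    exact (ENNReal.ofReal_le_ofReal_iff (by positivity)).1 hyle
  have h2 : Φ y ≤ ∫ t, Λ (g t) ∂ν := by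
    refine le_trans ?_ hj
    refine hΦmono _ _ hy ?_
    rwa [abs_of_nonneg hI0]
  refine (ENNReal.ofReal_le_ofReal h2).trans ?_
  rw [ofReal_integral_eq_lintegral_ofReal (show Integrable (fun t => Λ (g t)) ν from hΛg) (Eventually.of_forall fun t => hΦnn _)]
  refine le_of_eq (lintegral_congr_ae ?_)
  filter_upwards [hν] with t ht
  have := hψpos t ht
  simp only [hΛdef, hg]
  split_ifs with h
  · rw [abs_of_nonneg (by positivity), ← Real.rpow_mul (by positivity), mul_one_div_cancel hp.ne',
      Real.rpow_one]
  · rw [abs_zero, Real.zero_rpow (by positivity), hΦ0]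

lemma tonelli_step (a b : ℝ) (ν : Measure ℝ) [IsProbabilityMeasure ν]
    (hν : ∀ᵐ t ∂ν, t ∈ Ioo a b) (h : ℝ → ℝ≥0∞) (hh : Measurable h) (m : ℝ → ℝ)
    (hmdef : ∀ x, m x = (∫⁻ t in Icc x b, h t).toReal) (hm : Measurable m)
    (hfin : ∀ x ∈ Ioo a b, ∫⁻ t in Icc x b, h t ≠ ⊤)
    (hpos : ∀ x ∈ Ioo a b, ∫⁻ t in Icc x b, h t ≠ 0) :
    ∫⁻ x in Ioo a b, (∫⁻ t, ENNReal.ofReal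
      (if t ≤ x then 1/2 * m x ^ (-(1/2) : ℝ) * m t ^ (-(1/2) : ℝ) else 0) ∂ν) * h x ≤ 1 := by
  have hmeas : Measurable (fun q : ℝ × ℝ => ENNReal.ofReal
      (if q.2 ≤ q.1 then 1/2 * m q.1 ^ (-(1/2) : ℝ) * m q.2 ^ (-(1/2) : ℝ) else 0) * h q.1) := by
    refine Measurable.mul (Measurable.ennreal_ofReal (Measurable.ite
      (measurableSet_le measurable_snd measurable_fst) ?_ measurable_const))
      (hh.comp measurable_fst)
    exact (((hm.comp measurable_fst).pow_const _).const_mul _).mul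
      ((hm.comp measurable_snd).pow_const _)
  have e1 : ∀ x, (∫⁻ t, ENNReal.ofReal
      (if t ≤ x then 1/2 * m x ^ (-(1/2) : ℝ) * m t ^ (-(1/2) : ℝ) else 0) ∂ν) * h x
      = ∫⁻ t, ENNReal.ofReal
      (if t ≤ x then 1/2 * m x ^ (-(1/2) : ℝ) * m t ^ (-(1/2) : ℝ) else 0) * h x ∂ν := by
    intro x
    rw [lintegral_mul_const]
    exact Measurable.ennreal_ofReal (Measurable.ite measurableSet_Iic
      ((hm.pow_const _).const_mul _) measurable_const)
  simp_rw [e1]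
  rw [lintegral_lintegral_swap hmeas.aemeasurable]
  calc _ ≤ ∫⁻ t, 1 ∂ν := by
        refine lintegral_mono_ae ?_
        filter_upwards [hν] with t ht
        have hmt : 0 < m t := by rw [hmdef]; exact ENNReal.toReal_pos (hpos t ht) (hfin t ht)
        calc _ ≤ ∫⁻ x in Ioo a b, (Icc t b).indicator (fun x =>
                ENNReal.ofReal (1/2 * m t ^ (-(1/2) : ℝ)) *
                  (h x * ENNReal.ofReal (m x ^ (-(1/2) : ℝ)))) x := by
              refine setLIntegral_mono' measurableSet_Ioo fun x hx => ?_
              by_cases htx : t ≤ x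
              · rw [if_pos htx, indicator_of_mem (show x ∈ Icc t b from ⟨htx, hx.2.le⟩)]
                have hmx : 0 ≤ m x := by rw [hmdef]; exact ENNReal.toReal_nonneg
                rw [show 1/2 * m x ^ (-(1/2) : ℝ) * m t ^ (-(1/2) : ℝ) =
                  (1/2 * m t ^ (-(1/2) : ℝ)) * m x ^ (-(1/2) : ℝ) by ring,
                  ENNReal.ofReal_mul (by positivity)]
                exact le_of_eq (by ring)
              · simp [if_neg htx]
          _ ≤ ∫⁻ x, (Icc t b).indicator (fun x =>
                ENNReal.ofReal (1/2 * m t ^ (-(1/2) : ℝ)) *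
                  (h x * ENNReal.ofReal (m x ^ (-(1/2) : ℝ)))) x := setLIntegral_le_lintegral _ _
          _ = ENNReal.ofReal (1/2 * m t ^ (-(1/2) : ℝ)) *
                ∫⁻ x in Icc t b, h x * ENNReal.ofReal (m x ^ (-(1/2) : ℝ)) := by
              rw [lintegral_indicator measurableSet_Icc,
                lintegral_const_mul' _ _ ENNReal.ofReal_ne_top]
          _ ≤ ENNReal.ofReal (1/2 * m t ^ (-(1/2) : ℝ)) *
                ENNReal.ofReal (2 * m t ^ (1/2 : ℝ)) := by
              gcongr
              have := dens_right h hh t b (hfin t ht) (hpos t ht)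
              simp_rw [← hmdef] at this
              exact this
          _ = 1 := by
              rw [← ENNReal.ofReal_mul (by positivity)]
              rw [show 1/2 * m t ^ (-(1/2) : ℝ) * (2 * m t ^ (1/2 : ℝ)) =
                m t ^ (-(1/2) : ℝ) * m t ^ (1/2 : ℝ) by ring, ← Real.rpow_add hmt]
              norm_num
    _ = 1 := by simp

/-- Weighted Orlicz–Hardy inequality for `x ↦ ∫ₐ^x f τ`: if `S(p,Φ,μ,τ,w) < ∞` then
`‖∫ₐ^• f τ‖_{L_μ^Φ[a,b]} ≤ C₀(Φ) S(p,Φ,μ,τ,w) ‖f‖_{L_w^p[a,b]}`. -/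
theorem orlicz_hardy_left_weighted
    (a b : ℝ) (hab : a < b) (p pc : ℝ) (hp : 1 < p) (hpc : pc = p / (p - 1))
    (Φ Φinv μ w τ : ℝ → ℝ)
    (hΦ : IsYoung Φ) (hsub : Submult Φ) (hinv : IsYoungInv Φ Φinv)
    (hΛ : ConvexOn ℝ Set.univ (fun t => Φ (|t| ^ (1 / p))))
    (hμ : IsWeight μ a b) (hw : IsWeight w a b) (hτ : IsWeight τ a b)
    (S : ℝ≥0∞)
    (hS : S = ⨆ x ∈ Set.Ioo a b,
      ((ENNReal.ofReal (Φinv ((wInt μ x b).toReal ^ (-(1/2) : ℝ)))) ^ 2)⁻¹ *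
        (∫⁻ t in Set.Icc a x, ENNReal.ofReal (τ t ^ pc * w t ^ (1 - pc))) ^ (1 / pc))
    (hSfin : S < ⊤) :
    ∀ f : ℝ → ℝ, Measurable f →
      (∫⁻ t in Set.Icc a b, ENNReal.ofReal (|f t| ^ p * w t)) < ⊤ →
      luxNorm Φ μ a b (fun x => ∫ t in a..x, f t * τ t)
        ≤ ENNReal.ofReal (2 * (Φinv (1/2))⁻¹) * S * lpNorm w p a b f := by
  intro f hf hfin
  obtain ⟨hΦconv, hΦeven, hΦ0, hΦnn, -⟩ := hΦ
  obtain ⟨hinv0, hinvr, hinvl⟩ := hinv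
  obtain ⟨hμm, hμ0, hμpos⟩ := hμ
  obtain ⟨hwm, hw0, hwpos⟩ := hw
  obtain ⟨hτm, hτ0, hτpos⟩ := hτ
  have hpq : p.HolderConjugate pc := by
    rw [Real.holderConjugate_iff_eq_conjExponent hp]; exact hpc
  have hp0 : 0 < p := hpq.pos
  have hq0 : 0 < pc := hpq.symm.pos
  -- facts about Φ and its inverse
  have hΦmono : ∀ s t, 0 ≤ s → s ≤ t → Φ s ≤ Φ t := by
    intro s t hs hst
    rcases hst.eq_or_lt with rfl | hlt
    · exact le_rfl
    have ht : 0 < t := hs.trans_lt hlt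
    have hst1 : 0 ≤ 1 - s/t := by rw [sub_nonneg, div_le_one ht]; exact hst
    have hst2 : 0 ≤ s/t := by positivity
    have h := hΦconv.2 (mem_univ 0) (mem_univ t) hst1 hst2 (by ring)
    simp only [smul_eq_mul, mul_zero, zero_add, hΦ0] at h
    rw [div_mul_cancel₀ _ ht.ne'] at h
    refine h.trans ?_
    have : s / t ≤ 1 := by rw [div_le_one ht]; exact hst
    nlinarith [hΦnn t]
  have hinvmono : ∀ s t, 0 ≤ s → s ≤ t → Φinv s ≤ Φinv t := by
    intro s t hs hst
    by_contra! hlt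
    have h := hΦmono _ _ (hinv0 t (hs.trans hst)) hlt.le
    rw [hinvr t (hs.trans hst), hinvr s hs] at h
    have : s = t := le_antisymm hst h
    rw [this] at hlt; exact lt_irrefl _ hlt
  have hinvpos : ∀ t, 0 < t → 0 < Φinv t := by
    intro t ht
    rcases (hinv0 t ht.le).eq_or_lt with h | h
    · have h2 := hinvr t ht.le
      rw [← h, hΦ0] at h2; exact absurd h2 ht.ne
    · exact h
  have hinvz : Φinv 0 = 0 := by
    have := hinvl 0 le_rfl
    rwa [hΦ0] at this
  -- positivity of integrals of the weights
  have hposint : ∀ (h : ℝ → ℝ≥0∞), Measurable h →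
      (∀ᵐ x ∂(volume.restrict (Icc a b)), 0 < h x) → ∀ c d, a ≤ c → c < d → d ≤ b →
      ∫⁻ t in Icc c d, h t ≠ 0 := by
    intro h hh hpos c d hac hcd hdb hz
    rw [lintegral_eq_zero_iff hh] at hz
    have hsub : Icc c d ⊆ Icc a b := Icc_subset_Icc hac hdb
    have h2 := ae_restrict_of_ae_restrict_of_subset hsub hpos
    have h3 : ∀ᵐ x ∂(volume.restrict (Icc c d)), False := by
      filter_upwards [hz, h2] with x hx hx2
      exact hx2.ne' hx
    rw [ae_iff] at h3
    simp at h3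
    linarith
  set σ : ℝ → ℝ≥0∞ := fun t => ENNReal.ofReal (τ t ^ pc * w t ^ (1 - pc)) with hσ
  have hσm : Measurable σ := ((hτm.pow_const _).mul (hwm.pow_const _)).ennreal_ofReal
  have hσpos : ∀ᵐ x ∂(volume.restrict (Icc a b)), 0 < σ x := by
    filter_upwards [hwpos, hτpos] with x h1 h2
    simp only [hσ, ENNReal.ofReal_pos]; positivity
  have hμm' : Measurable fun t => ENNReal.ofReal (μ t) := hμm.ennreal_ofReal
  have hμpos' : ∀ᵐ x ∂(volume.restrict (Icc a b)), 0 < ENNReal.ofReal (μ x) := by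
    filter_upwards [hμpos] with x h1
    simpa using h1
  set m : ℝ → ℝ := fun x => (wInt μ x b).toReal with hmdef
  set ψ : ℝ → ℝ := fun x => Φinv (m x ^ (-(1/2) : ℝ)) with hψdef
  have hm0 : ∀ x, 0 ≤ m x := fun x => ENNReal.toReal_nonneg
  have hSx : ∀ x ∈ Ioo a b,
      ((ENNReal.ofReal (ψ x)) ^ 2)⁻¹ * (∫⁻ t in Icc a x, σ t) ^ (1 / pc) ≤ S := by
    intro x hx
    rw [hS]
    exact le_iSup₂ (f := fun x (_ : x ∈ Ioo a b) =>
      ((ENNReal.ofReal (ψ x)) ^ 2)⁻¹ * (∫⁻ t in Icc a x, σ t) ^ (1 / pc)) x hx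
  have hVpos : ∀ x ∈ Ioo a b, ∫⁻ t in Icc a x, σ t ≠ 0 := fun x hx =>
    hposint σ hσm hσpos a x le_rfl hx.1 hx.2.le
  have hWpos : ∀ x ∈ Ioo a b, wInt μ x b ≠ 0 := fun x hx =>
    hposint _ hμm' hμpos' x b hx.1.le hx.2 le_rfl
  have hWfin : ∀ x ∈ Ioo a b, wInt μ x b ≠ ⊤ := by
    intro x hx htop
    have h := hSx x hx
    have hm : m x = 0 := by simp [hmdef, htop]
    have hψz : ψ x = 0 := by
      simp only [hψdef, hm]
      rw [Real.zero_rpow (by norm_num), hinvz]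
    rw [hψz] at h
    have hne : (∫⁻ t in Icc a x, σ t) ^ (1 / pc) ≠ 0 := by
      intro h0
      rw [ENNReal.rpow_eq_zero_iff] at h0
      rcases h0 with h0 | h0
      · exact hVpos x hx h0.1
      · have : 0 < 1 / pc := by positivity
        linarith [h0.2]
    simp only [ENNReal.ofReal_zero, ne_eq, OfNat.ofNat_ne_zero, not_false_eq_true, zero_pow,
      ENNReal.inv_zero, ENNReal.top_mul hne, top_le_iff] at h
    exact hSfin.ne h
  have hmpos : ∀ x ∈ Ioo a b, 0 < m x := fun x hx =>
    ENNReal.toReal_pos (hWpos x hx) (hWfin x hx)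
  have hψpos : ∀ x ∈ Ioo a b, 0 < ψ x := fun x hx =>
    hinvpos _ (Real.rpow_pos_of_pos (hmpos x hx) _)
  have hWanti : Antitone fun x => wInt μ x b := fun x y hxy =>
    lintegral_mono_set (Icc_subset_Icc_left hxy)
  have hmm : Measurable m := hWanti.measurable.ennreal_toReal
  have hψm : Measurable ψ := by
    have h1 : Monotone fun t => Φinv (max t 0) := fun s t hst =>
      hinvmono _ _ (le_max_right _ _) (max_le_max_right _ hst)
    have h2 : ψ = (fun t => Φinv (max t 0)) ∘ fun x => m x ^ (-(1/2) : ℝ) := by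
      funext x
      simp only [hψdef, Function.comp]
      rw [max_eq_left (Real.rpow_nonneg (hm0 x) _)]
    rw [h2]
    exact h1.measurable.comp (hmm.pow_const _)
  have hψmono : MonotoneOn ψ (Ioo a b) := by
    intro x hx y hy hxy
    refine hinvmono _ _ (Real.rpow_nonneg (hm0 x) _) ?_
    exact Real.rpow_le_rpow_of_nonpos (hmpos y hy)
      (ENNReal.toReal_mono (hWfin x hx) (hWanti hxy)) (by norm_num)
  have hVle : ∀ x ∈ Ioo a b,
      (∫⁻ t in Icc a x, σ t) ^ (1 / pc) ≤ S * ENNReal.ofReal (ψ x) ^ 2 := by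
    intro x hx
    have h := hSx x hx
    rw [mul_comm, ← div_eq_mul_inv] at h
    refine (ENNReal.div_le_iff_le_mul (Or.inl ?_) (Or.inl ?_)).1 h
    · exact pow_ne_zero _ (by simpa using hψpos x hx)
    · exact ENNReal.pow_ne_top ENNReal.ofReal_ne_top
  have hVfin : ∀ x ∈ Ioo a b, ∫⁻ t in Icc a x, σ t ≠ ⊤ := by
    intro x hx htop
    have h := hVle x hx
    rw [htop, ENNReal.top_rpow_of_pos (by positivity), top_le_iff] at h
    exact ENNReal.mul_ne_top hSfin.ne (ENNReal.pow_ne_top ENNReal.ofReal_ne_top) h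
  set s : ℝ := S.toReal with hsdef
  have hSs : S = ENNReal.ofReal s := (ENNReal.ofReal_toReal hSfin.ne).symm
  have hVreal : ∀ x ∈ Ioo a b, (∫⁻ t in Icc a x, σ t).toReal ^ (1 / pc) ≤ s * ψ x ^ 2 := by
    intro x hx
    have h := ENNReal.toReal_mono
      (ENNReal.mul_ne_top hSfin.ne (ENNReal.pow_ne_top ENNReal.ofReal_ne_top)) (hVle x hx)
    rwa [← ENNReal.toReal_rpow, ENNReal.toReal_mul, ENNReal.toReal_pow,
      ENNReal.toReal_ofReal (hψpos x hx).le] at h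
  have hs : 0 < s := by
    have hx : (a + b) / 2 ∈ Ioo a b := ⟨by linarith, by linarith⟩
    have h := hVreal _ hx
    have h1 : 0 < (∫⁻ t in Icc a ((a+b)/2), σ t).toReal ^ (1 / pc) :=
      Real.rpow_pos_of_pos (ENNReal.toReal_pos (hVpos _ hx) (hVfin _ hx)) _
    by_contra! hneg
    nlinarith [sq_nonneg (ψ ((a+b)/2))]
  set κ : ℝ := Φinv (1/2) with hκdef
  have hκ : 0 < κ := hinvpos _ (by norm_num)
  set I := ∫⁻ t in Icc a b, ENNReal.ofReal (|f t| ^ p * w t) with hI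
  have hfwm : Measurable fun t => |f t| ^ p * w t := (hf.abs.pow_const _).mul hwm
  rcases eq_or_ne I 0 with hI0 | hI0
  · -- f = 0 a.e.
    have hf0 : ∀ᵐ t ∂(volume.restrict (Icc a b)), f t = 0 := by
      rw [hI, lintegral_eq_zero_iff hfwm.ennreal_ofReal] at hI0
      filter_upwards [hI0, hwpos] with t ht hwt
      simp only [Pi.zero_apply, ENNReal.ofReal_eq_zero] at ht
      by_contra hne
      have : 0 < |f t| ^ p * w t := mul_pos (Real.rpow_pos_of_pos (abs_pos.2 hne) _) hwt
      linarith
    have hF0 : ∀ x ∈ Icc a b, ∫ t in a..x, f t * τ t = 0 := by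
      intro x hx
      rw [intervalIntegral.integral_of_le hx.1]
      refine integral_eq_zero_of_ae ?_
      have := ae_restrict_of_ae_restrict_of_subset
        (Ioc_subset_Icc_self.trans (Icc_subset_Icc_right hx.2) : Ioc a x ⊆ Icc a b) hf0
      filter_upwards [this] with t ht
      simp [ht]
    have hz : luxNorm Φ μ a b (fun x => ∫ t in a..x, f t * τ t) = 0 := by
      refine le_antisymm (ENNReal.le_of_forall_pos_le_add fun ε hε _ => ?_) (zero_le)
      rw [zero_add]
      refine sInf_le ⟨ε, hε, by simp, ?_⟩
      have : ∫⁻ x in Icc a b, ENNReal.ofReal (Φ ((∫ t in a..x, f t * τ t) / ε) * μ x)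
          = ∫⁻ x in Icc a b, 0 := by
        refine setLIntegral_congr_fun measurableSet_Icc fun x hx => ?_
        simp only [hF0 x hx, zero_div, hΦ0, zero_mul, ENNReal.ofReal_zero]
      rw [this]; simp
    rw [hz]; exact zero_le
  set A : ℝ := I.toReal with hA
  have hApos : 0 < A := ENNReal.toReal_pos hI0 hfin.ne
  have hIA : I = ENNReal.ofReal A := (ENNReal.ofReal_toReal hfin.ne).symm
  set c : ℝ := 2 * κ⁻¹ * s * A ^ (1/p) with hc
  have hcpos : 0 < c := by positivity
  have hrhs : ENNReal.ofReal (2 * κ⁻¹) * S * lpNorm w p a b f = ENNReal.ofReal c := by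
    unfold _root_.lpNorm
    rw [← hI, hIA, hSs, ENNReal.ofReal_rpow_of_nonneg hApos.le (by positivity),
      ← ENNReal.ofReal_mul (by positivity), ← ENNReal.ofReal_mul (by positivity)]
  rw [hrhs]
  refine sInf_le ⟨c, hcpos, rfl, ?_⟩
  set ρ : ℝ → ℝ≥0∞ := fun t => ENNReal.ofReal (|f t| ^ p * w t / A) with hρ
  have hρm : Measurable ρ := (hfwm.div_const _).ennreal_ofReal
  set ν : Measure ℝ := (volume.restrict (Ioo a b)).withDensity ρ with hνdef
  have hνprob : IsProbabilityMeasure ν := by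
    refine ⟨?_⟩
    rw [hνdef, withDensity_apply _ MeasurableSet.univ, Measure.restrict_univ,
      setLIntegral_congr Ioo_ae_eq_Icc]
    simp only [hρ, div_eq_mul_inv]
    have : ∀ t, ENNReal.ofReal (|f t| ^ p * w t * A⁻¹)
        = ENNReal.ofReal (|f t| ^ p * w t) * ENNReal.ofReal A⁻¹ := fun t =>
      ENNReal.ofReal_mul (mul_nonneg (by positivity) (hw0 t))
    simp_rw [this]
    rw [lintegral_mul_const _ hfwm.ennreal_ofReal, ← hI, hIA, ← ENNReal.ofReal_mul hApos.le,
      mul_inv_cancel₀ hApos.ne', ENNReal.ofReal_one]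
  have hνmem : ∀ᵐ t ∂ν, t ∈ Ioo a b :=
    (withDensity_absolutelyContinuous _ _).ae_le (ae_restrict_mem measurableSet_Ioo)
  have hpt : ∀ x ∈ Ioo a b, ENNReal.ofReal (Φ ((∫ t in a..x, f t * τ t) / c)) ≤
      ∫⁻ t, ENNReal.ofReal
        (if t ≤ x then 1/2 * m x ^ (-(1/2) : ℝ) * m t ^ (-(1/2) : ℝ) else 0) ∂ν := by
    intro x hx
    have hψx := hψpos x hx
    have hsub' : Ioc a x ⊆ Ioo a b := fun t ht => ⟨ht.1, ht.2.trans_lt hx.2⟩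
    have hH := hardy_pointwise a x p pc hx.1 hpq f w τ ψ hf hwm hτm hψm hτ0
      (ae_restrict_of_ae_restrict_of_subset (hsub'.trans Ioo_subset_Icc_self) hwpos) s hs
      (fun t ht => hψpos t (hsub' ht)) (fun t ht => hVfin t (hsub' ht))
      (fun t ht => hVpos t (hsub' ht)) (fun t ht => hVreal t (hsub' ht))
    set J := ∫⁻ t in Ioc a x, ENNReal.ofReal (|f t| ^ p * w t * ψ t ^ p) with hJ
    set D : ℝ := ∫ t in a..x, f t * τ t with hD
    have hg : ∫⁻ t, ENNReal.ofReal (if t ≤ x then (κ * ψ x * ψ t) ^ p else 0) ∂ν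
        = ENNReal.ofReal ((κ * ψ x) ^ p / A) * J := by
      rw [hνdef, lintegral_withDensity_eq_lintegral_mul _ hρm
        (Measurable.ennreal_ofReal (Measurable.ite measurableSet_Iic
          ((hψm.const_mul _).pow_const _) measurable_const)),
        hJ, ← lintegral_const_mul' _ _ ENNReal.ofReal_ne_top,
        ← lintegral_indicator measurableSet_Ioo, ← lintegral_indicator measurableSet_Ioc]
      refine lintegral_congr fun t => ?_
      by_cases ht : t ∈ Ioc a x
      · have hψt := hψpos t (hsub' ht)
        have hwt := hw0 t
        rw [indicator_of_mem (hsub' ht), indicator_of_mem ht]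
        simp only [Pi.mul_apply, hρ, if_pos ht.2]
        rw [← ENNReal.ofReal_mul (by positivity), ← ENNReal.ofReal_mul (by positivity),
          Real.mul_rpow (by positivity) hψt.le]
        congr 1; ring
      · rw [indicator_of_notMem ht]
        by_cases ht2 : t ∈ Ioo a b
        · rw [indicator_of_mem ht2]
          have : ¬ t ≤ x := fun h => ht ⟨ht2.1, h⟩
          simp [if_neg this]
        · rw [indicator_of_notMem ht2]
    have hyle : ENNReal.ofReal |D / c| ≤
        (∫⁻ t, ENNReal.ofReal (if t ≤ x then (κ * ψ x * ψ t) ^ p else 0) ∂ν) ^ (1 / p) := by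
      rw [hg, ENNReal.mul_rpow_of_nonneg _ _ (by positivity),
        ENNReal.ofReal_rpow_of_nonneg (by positivity) (by positivity),
        Real.div_rpow (by positivity) hApos.le, ← Real.rpow_mul (by positivity),
        mul_one_div_cancel hp0.ne', Real.rpow_one, abs_div, abs_of_pos hcpos, div_eq_mul_inv,
        ENNReal.ofReal_mul (abs_nonneg _)]
      refine (mul_le_mul_left hH _).trans (le_of_eq ?_)
      rw [mul_right_comm, ← ENNReal.ofReal_mul (by positivity)]
      congr 2
      have : 0 < A ^ (1/p) := by positivity
      simp only [hc]
      field_simp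
    have hjen := jensen_step a b p κ x |D / c| hp0 hx Φ ψ ν hνmem hψm hψpos hψmono hκ
      (abs_nonneg _) hΦmono hΦ0 hΦnn hΛ hyle
    have heven : Φ |D / c| = Φ (D / c) := by
      rcases abs_choice (D / c) with h | h <;> rw [h]
      exact hΦeven _
    rw [heven] at hjen
    refine hjen.trans (lintegral_mono_ae ?_)
    filter_upwards [hνmem] with t ht
    refine ENNReal.ofReal_le_ofReal ?_
    split_ifs with htx
    · have hψt := hψpos t ht
      have hmx := hmpos x hx
      have hmt := hmpos t ht
      have e1 : Φ κ = 1/2 := hinvr _ (by norm_num)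
      have e2 : ∀ y, Φ (ψ y) = m y ^ (-(1/2) : ℝ) := fun y =>
        hinvr _ (Real.rpow_nonneg (hm0 y) _)
      calc Φ (κ * ψ x * ψ t) ≤ Φ (κ * ψ x) * Φ (ψ t) := hsub _ _ (by positivity) hψt.le
        _ ≤ Φ κ * Φ (ψ x) * Φ (ψ t) :=
          mul_le_mul_of_nonneg_right (hsub _ _ hκ.le hψx.le) (hΦnn _)
        _ = _ := by rw [e1, e2, e2]
    · exact le_rfl
  rw [← setLIntegral_congr Ioo_ae_eq_Icc]
  refine le_trans ?_ (tonelli_step a b ν hνmem (fun t => ENNReal.ofReal (μ t)) hμm' m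
    (fun x => rfl) hmm hWfin hWpos)
  refine setLIntegral_mono' measurableSet_Ioo fun x hx => ?_
  rw [ENNReal.ofReal_mul (hΦnn _)]
  exact mul_le_mul_left (hpt x hx) _
end
end

section
/- Let -∞ < a < b < ∞, 1 < p < ∞ with conjugate exponent p' = p/(p−1), let μ, w and τ be weights on [a,b], and let Φ be a Young function that is submultiplicative and invertible on [0,∞) such that Λ(t) = Φ(t^{1/p}) is convex. Define T(p,Φ,μ,τ,w) := sup_{a<x<b} { [Φ^{-1}(μ[a,x]^{-1/2})]^{-2} · (∫_x^b τ(t)^{p'} w(t)^{1−p'} dt)^{1/p'} }. If T(p,Φ,μ,τ,w) < ∞, then for every f ∈ L_w^p[a,b], ‖ x ↦ ∫_x^b f(t) τ(t) dt ‖_{L_μ^Φ[a,b]} ≤ C₀(Φ) · T(p,Φ,μ,τ,w) · ‖f‖_{L_w^p[a,b]}, where C₀(Φ) := 2·[Φ^{-1}(1/2)]^{-1}. -/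
open MeasureTheory Set Filter
open scoped ENNReal NNReal

noncomputable section

lemma layer_aux {α : Type*} [MeasurableSpace α] (ν : Measure α) (G : α → ℝ≥0∞)
    (hG : Measurable G) (h : ∀ s, ν {x | G x ≤ s} ≤ s) (hfin : ν univ ≠ ⊤) :
    ∫⁻ x, (G x) ^ (-(1/2) : ℝ) ∂ν ≤ 2 * (ν univ) ^ (1/2 : ℝ) := by
  rcases eq_or_ne (ν univ) 0 with h0 | h0
  · rw [Measure.measure_univ_eq_zero] at h0
    simp [h0]
  set m : ℝ := (ν univ).toReal with hm
  have hmpos : 0 < m := ENNReal.toReal_pos h0 hfin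
  have hmE : ν univ = ENNReal.ofReal m := (ENNReal.ofReal_toReal hfin).symm
  have hnz : ∀ᵐ x ∂ν, G x ≠ 0 := by
    have := h 0
    rw [ae_iff]
    simpa using this
  have h1 : ∫⁻ x, (G x) ^ (-(1/2) : ℝ) ∂ν
      = ∫⁻ x, ENNReal.ofReal ((G x).toReal ^ (-(1/2) : ℝ)) ∂ν := by
    apply lintegral_congr_ae
    filter_upwards [hnz] with x hx
    rcases eq_or_ne (G x) ⊤ with ht | ht
    · rw [ht, ENNReal.top_rpow_of_neg (by norm_num), ENNReal.toReal_top,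
        Real.zero_rpow (by norm_num), ENNReal.ofReal_zero]
    · rw [← ENNReal.ofReal_rpow_of_pos (ENNReal.toReal_pos hx ht), ENNReal.ofReal_toReal ht]
  rw [h1, lintegral_eq_lintegral_meas_le ν
    (Eventually.of_forall fun x => by positivity) (by fun_prop)]
  set r : ℝ := m ^ (-(1/2) : ℝ) with hr
  have hrpos : 0 < r := Real.rpow_pos_of_pos hmpos _
  have hsplit : Ioi (0:ℝ) = Ioc 0 r ∪ Ioi r := (Ioc_union_Ioi_eq_Ioi hrpos.le).symm
  have hmr : m * r = m ^ (1/2 : ℝ) := by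
    rw [hr]
    nth_rewrite 1 [← Real.rpow_one m]
    rw [← Real.rpow_add hmpos]; norm_num
  have hA : ∫⁻ t in Ioc 0 r, ν {x | t ≤ (G x).toReal ^ (-(1/2) : ℝ)}
      ≤ ENNReal.ofReal (m ^ (1/2 : ℝ)) := by
    calc _ ≤ ∫⁻ t in Ioc 0 r, ENNReal.ofReal m := by
          apply lintegral_mono; intro t; rw [← hmE]; exact measure_mono (subset_univ _)
      _ = _ := by
          rw [setLIntegral_const, Real.volume_Ioc, ← ENNReal.ofReal_mul hmpos.le, sub_zero, hmr]
  have hB : ∫⁻ t in Ioi r, ν {x | t ≤ (G x).toReal ^ (-(1/2) : ℝ)}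
      ≤ ENNReal.ofReal (m ^ (1/2 : ℝ)) := by
    calc _ ≤ ∫⁻ t in Ioi r, ENNReal.ofReal (t ^ (-2 : ℝ)) := by
          apply setLIntegral_mono' measurableSet_Ioi
          intro t ht
          have ht0 : 0 < t := hrpos.trans ht
          refine le_trans (measure_mono ?_) (h _)
          intro x hx
          change t ≤ _ at hx
          change G x ≤ _
          have hgt : 0 < (G x).toReal := by
            rcases (ENNReal.toReal_nonneg (a := G x)).eq_or_lt with h' | h'
            · rw [← h', Real.zero_rpow (by norm_num)] at hx; linarith
            · exact h'
          have hne : G x ≠ ⊤ := by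
            intro h'; rw [h'] at hgt; simp at hgt
          rw [← ENNReal.ofReal_toReal hne]
          apply ENNReal.ofReal_le_ofReal
          have := Real.rpow_le_rpow_of_nonpos ht0 hx (by norm_num : (-2:ℝ) ≤ 0)
          rw [← Real.rpow_mul hgt.le] at this
          norm_num at this
          norm_num
          exact this
      _ = ENNReal.ofReal (∫ t in Ioi r, t ^ (-2:ℝ)) := by
          rw [ofReal_integral_eq_lintegral_ofReal]
          · exact integrableOn_Ioi_rpow_of_lt (by norm_num) hrpos
          · filter_upwards [ae_restrict_mem measurableSet_Ioi] with t ht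
            exact Real.rpow_nonneg (hrpos.trans ht).le _
      _ = _ := by
          rw [integral_Ioi_rpow_of_lt (by norm_num) hrpos, hr]
          congr 1
          rw [← Real.rpow_mul hmpos.le]
          norm_num
  calc _ ≤ _ + _ := by rw [hsplit]; exact lintegral_union_le _ _ _
    _ ≤ _ := add_le_add hA hB
    _ = _ := by
      rw [hmE, ENNReal.ofReal_rpow_of_pos hmpos, two_mul]

lemma meas_Iic_aux (ν : Measure ℝ) (s : ℝ≥0∞) : ν {x | ν (Iic x) ≤ s} ≤ s := by
  set A := {x | ν (Iic x) ≤ s} with hA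
  have hlow : ∀ x ∈ A, ∀ y ≤ x, y ∈ A := fun x hx y hy =>
    (measure_mono (Iic_subset_Iic.2 hy)).trans hx
  by_cases hmax : ∃ x ∈ A, ∀ y ∈ A, y ≤ x
  · obtain ⟨x, hx, hy⟩ := hmax
    exact (measure_mono (fun y h => hy y h)).trans hx
  · push Not at hmax
    have hsub : A ⊆ ⋃ q ∈ {q : ℚ | (q:ℝ) ∈ A}, Iic (q:ℝ) := by
      intro x hx
      obtain ⟨y, hy, hxy⟩ := hmax x hx
      obtain ⟨q, hq1, hq2⟩ := exists_rat_btwn hxy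
      simp only [mem_iUnion]
      exact ⟨q, hlow y hy _ hq2.le, hq1.le⟩
    refine (measure_mono hsub).trans ?_
    rw [measure_biUnion_eq_iSup (to_countable _)]
    · exact iSup₂_le fun q hq => hq
    · intro q hq q' hq'
      rcases le_total q q' with h | h
      · exact ⟨q', hq', Iic_subset_Iic.2 (by exact_mod_cast h), subset_rfl⟩
      · exact ⟨q, hq, subset_rfl, Iic_subset_Iic.2 (by exact_mod_cast h)⟩

lemma meas_Ici_aux (ν : Measure ℝ) (s : ℝ≥0∞) : ν {x | ν (Ici x) ≤ s} ≤ s := by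
  set A := {x | ν (Ici x) ≤ s} with hA
  have hlow : ∀ x ∈ A, ∀ y, x ≤ y → y ∈ A := fun x hx y hy =>
    (measure_mono (Ici_subset_Ici.2 hy)).trans hx
  by_cases hmax : ∃ x ∈ A, ∀ y ∈ A, x ≤ y
  · obtain ⟨x, hx, hy⟩ := hmax
    exact (measure_mono (fun y h => hy y h)).trans hx
  · push Not at hmax
    have hsub : A ⊆ ⋃ q ∈ {q : ℚ | (q:ℝ) ∈ A}, Ici (q:ℝ) := by
      intro x hx
      obtain ⟨y, hy, hxy⟩ := hmax x hx
      obtain ⟨q, hq1, hq2⟩ := exists_rat_btwn hxy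
      simp only [mem_iUnion]
      exact ⟨q, hlow y hy _ hq1.le, hq2.le⟩
    refine (measure_mono hsub).trans ?_
    rw [measure_biUnion_eq_iSup (to_countable _)]
    · exact iSup₂_le fun q hq => hq
    · intro q hq q' hq'
      rcases le_total q q' with h | h
      · exact ⟨q, hq, subset_rfl, Ici_subset_Ici.2 (by exact_mod_cast h)⟩
      · exact ⟨q', hq', Ici_subset_Ici.2 (by exact_mod_cast h), subset_rfl⟩

lemma left_aux (σ : ℝ → ℝ≥0∞) (hσ : Measurable σ) (a t : ℝ)
    (hfin : ∫⁻ y in Icc a t, σ y ≠ ⊤) :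
    ∫⁻ x in Ioo a t, σ x * (∫⁻ y in Icc a x, σ y) ^ (-(1/2) : ℝ)
      ≤ 2 * (∫⁻ y in Icc a t, σ y) ^ (1/2 : ℝ) := by
  set ν := (volume.restrict (Ioo a t)).withDensity σ with hν
  have hu : ν univ = ∫⁻ y in Icc a t, σ y := by
    rw [hν, withDensity_apply _ MeasurableSet.univ, Measure.restrict_univ,
      setLIntegral_congr Ioo_ae_eq_Icc]
  have hx : ∀ x ∈ Ioo a t, ν (Iic x) = ∫⁻ y in Icc a x, σ y := by
    intro x hx
    rw [hν, withDensity_apply _ measurableSet_Iic, Measure.restrict_restrict measurableSet_Iic,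
      ← setLIntegral_congr (Ioc_ae_eq_Icc (a := a) (b := x))]
    congr 2
    ext y
    simp only [mem_inter_iff, mem_Iic, mem_Ioo, mem_Ioc]
    constructor
    · rintro ⟨h1, h2, h3⟩; exact ⟨h2, h1⟩
    · rintro ⟨h1, h2⟩; exact ⟨h2, h1, h2.trans_lt hx.2⟩
  have hmeas : Measurable (fun x => ν (Iic x)) := 
    Monotone.measurable (fun x y h => measure_mono (Iic_subset_Iic.2 h))
  have := layer_aux ν (fun x => ν (Iic x)) hmeas (meas_Iic_aux ν) (by rwa [hu])
  rw [hu] at this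
  refine le_trans (le_of_eq ?_) this
  rw [hν, lintegral_withDensity_eq_lintegral_mul _ hσ (by rw [← hν]; exact hmeas.pow_const _)]
  apply setLIntegral_congr_fun measurableSet_Ioo
  intro x hx'
  simp only [Pi.mul_apply]
  rw [← hν, hx x hx']

lemma right_aux (σ : ℝ → ℝ≥0∞) (hσ : Measurable σ) (t b : ℝ)
    (hfin : ∫⁻ y in Icc t b, σ y ≠ ⊤) :
    ∫⁻ x in Ioo t b, σ x * (∫⁻ y in Icc x b, σ y) ^ (-(1/2) : ℝ)
      ≤ 2 * (∫⁻ y in Icc t b, σ y) ^ (1/2 : ℝ) := by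
  set ν := (volume.restrict (Ioo t b)).withDensity σ with hν
  have hu : ν univ = ∫⁻ y in Icc t b, σ y := by
    rw [hν, withDensity_apply _ MeasurableSet.univ, Measure.restrict_univ,
      setLIntegral_congr Ioo_ae_eq_Icc]
  have hx : ∀ x ∈ Ioo t b, ν (Ici x) = ∫⁻ y in Icc x b, σ y := by
    intro x hx
    rw [hν, withDensity_apply _ measurableSet_Ici, Measure.restrict_restrict measurableSet_Ici,
      ← setLIntegral_congr (Ico_ae_eq_Icc (a := x) (b := b))]
    congr 2
    ext y
    simp only [mem_inter_iff, mem_Ici, mem_Ioo, mem_Ico]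
    constructor
    · rintro ⟨h1, h2, h3⟩; exact ⟨h1, h3⟩
    · rintro ⟨h1, h2⟩; exact ⟨h1, hx.1.trans_le h1, h2⟩
  have hmeas : Measurable (fun x => ν (Ici x)) := 
    Antitone.measurable (fun x y h => measure_mono (Ici_subset_Ici.2 h))
  have := layer_aux ν (fun x => ν (Ici x)) hmeas (meas_Ici_aux ν) (by rwa [hu])
  rw [hu] at this
  refine le_trans (le_of_eq ?_) this
  rw [hν, lintegral_withDensity_eq_lintegral_mul _ hσ (by rw [← hν]; exact hmeas.pow_const _)]
  apply setLIntegral_congr_fun measurableSet_Ioo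
  intro x hx'
  simp only [Pi.mul_apply]
  rw [← hν, hx x hx']

lemma holder_aux {p pc : ℝ} (hpq : p.HolderConjugate pc) (w τ f : ℝ → ℝ)
    (hw : Measurable w) (hτ : Measurable τ) (hf : Measurable f)
    (hτ0 : ∀ t, 0 ≤ τ t) (x b : ℝ)
    (hwpos : ∀ᵐ t ∂(volume.restrict (Ioo x b)), 0 < w t)
    (W : ℝ → ℝ≥0∞)
    (hW : W = fun y => ∫⁻ t in Icc y b, ENNReal.ofReal (τ t ^ pc * w t ^ (1 - pc)))
    (hWfin : W x ≠ ⊤) (hWpos : ∀ t ∈ Ioo x b, W t ≠ 0) :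
    ∫⁻ t in Ioo x b, ENNReal.ofReal (|f t| * τ t) ≤
      (∫⁻ t in Ioo x b, ENNReal.ofReal (|f t| ^ p * w t) * W t ^ (p / (2 * pc))) ^ (1 / p) *
      (2 * W x ^ (1/2 : ℝ)) ^ (1 / pc) := by
  have hp0 : 0 < p := hpq.pos
  have hpc0 : 0 < pc := hpq.symm.pos
  have hWanti : Antitone W := by
    rw [hW]; intro y z h
    exact lintegral_mono_set (Icc_subset_Icc_left h)
  have hWm : Measurable W := hWanti.measurable
  set σ : ℝ → ℝ≥0∞ := fun t => ENNReal.ofReal (τ t ^ pc * w t ^ (1 - pc)) with hσ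
  have hσm : Measurable σ := by fun_prop
  set A : ℝ → ℝ≥0∞ := fun t =>
    (ENNReal.ofReal (|f t| ^ p * w t) * W t ^ (p / (2 * pc))) ^ (1 / p) with hA
  set B : ℝ → ℝ≥0∞ := fun t => (σ t * W t ^ (-(1/2) : ℝ)) ^ (1 / pc) with hB
  have hAm : Measurable A := by
    apply Measurable.pow_const
    apply Measurable.mul
    · have : Measurable fun t => |f t| := hf.abs
      fun_prop
    · exact hWm.pow_const _
  have hBm : Measurable B := (hσm.mul (hWm.pow_const _)).pow_const _
  have key := ENNReal.lintegral_mul_le_Lp_mul_Lq (volume.restrict (Ioo x b)) hpq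
    hAm.aemeasurable hBm.aemeasurable
  have hAB : ∫⁻ t in Ioo x b, ENNReal.ofReal (|f t| * τ t) = ∫⁻ t in Ioo x b, (A * B) t := by
    apply lintegral_congr_ae
    filter_upwards [hwpos, ae_restrict_mem measurableSet_Ioo] with t hwt ht
    have hWt0 := hWpos t ht
    have hWtt : W t ≠ ⊤ := ne_top_of_le_ne_top hWfin (hWanti ht.1.le)
    simp only [Pi.mul_apply, hA, hB, hσ]
    rw [ENNReal.mul_rpow_of_nonneg _ _ (by positivity : 0 ≤ 1 / p),
      ENNReal.mul_rpow_of_nonneg _ _ (by positivity : 0 ≤ 1 / pc),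
      ← ENNReal.rpow_mul, ← ENNReal.rpow_mul, mul_mul_mul_comm,
      ← ENNReal.rpow_add _ _ hWt0 hWtt]
    have e1 : p / (2 * pc) * (1 / p) + -(1 / 2) * (1 / pc) = 0 := by field_simp; ring
    rw [e1, ENNReal.rpow_zero, mul_one, ENNReal.ofReal_rpow_of_nonneg (by positivity) (by positivity),
      ENNReal.ofReal_rpow_of_nonneg _ (by positivity), ← ENNReal.ofReal_mul (by positivity)]
    · congr 1
      rw [Real.mul_rpow (by positivity) hwt.le,
        Real.mul_rpow (Real.rpow_nonneg (hτ0 t) _) (by positivity), ← Real.rpow_mul (abs_nonneg _),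
        ← Real.rpow_mul (hτ0 t), ← Real.rpow_mul hwt.le, mul_one_div_cancel hp0.ne',
        mul_one_div_cancel hpc0.ne', Real.rpow_one, Real.rpow_one, mul_mul_mul_comm,
        ← Real.rpow_add hwt]
      have e2 : 1 / p + (1 - pc) * (1 / pc) = 0 := by
        have := hpq.inv_add_inv_eq_one
        field_simp at this ⊢
        linarith
      rw [e2, Real.rpow_zero, mul_one]
    · exact mul_nonneg (Real.rpow_nonneg (hτ0 t) _) (by positivity)
  rw [hAB]
  refine key.trans ?_
  have hAp : ∀ t, A t ^ p = ENNReal.ofReal (|f t| ^ p * w t) * W t ^ (p / (2 * pc)) := by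
    intro t; simp only [hA]; rw [← ENNReal.rpow_mul, one_div_mul_cancel hp0.ne', ENNReal.rpow_one]
  have hBp : ∀ t, B t ^ pc = σ t * W t ^ (-(1/2) : ℝ) := by
    intro t; simp only [hB]; rw [← ENNReal.rpow_mul, one_div_mul_cancel hpc0.ne', ENNReal.rpow_one]
  simp only [hAp, hBp]
  gcongr
  have := right_aux σ hσm x b (by rw [hW] at hWfin; exact hWfin)
  rw [hW]
  exact this

lemma young_mono {Φ : ℝ → ℝ} (hΦ : IsYoung Φ) {s t : ℝ} (h : |s| ≤ t) : Φ s ≤ Φ t := by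
  obtain ⟨hc, he, -⟩ := hΦ
  have := hc.le_max_of_mem_Icc (mem_univ (-t)) (mem_univ t) (abs_le.1 h)
  rwa [he, max_self] at this

lemma jensen_aux {Φ : ℝ → ℝ} (hΦ : IsYoung Φ) (hsub : Submult Φ) {p : ℝ} (hp : 1 < p)
    (hΛ : ConvexOn ℝ Set.univ (fun t => Φ (|t| ^ (1 / p))))
    (ν : Measure ℝ) [IsProbabilityMeasure ν] (g : ℝ → ℝ) (hg : Measurable g)
    (c K : ℝ) (hc : 0 ≤ c) (S : Set ℝ) (hS : MeasurableSet S)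
    (hb : ∀ t ∈ S, 0 ≤ g t ∧ g t ≤ K) :
    ENNReal.ofReal (Φ ((ENNReal.ofReal c *
      (∫⁻ t in S, ENNReal.ofReal (g t) ^ p ∂ν) ^ (1 / p)).toReal))
      ≤ ∫⁻ t in S, ENNReal.ofReal (Φ c * Φ (g t)) ∂ν := by
  have hp0 : 0 < p := by linarith
  have hΦ' := hΦ
  obtain ⟨hcv, he, h0, hnn, -⟩ := hΦ'
  have hcont : Continuous Φ := by
    have := hcv.continuousOn isOpen_univ
    exact continuousOn_univ.1 this
  set Λ : ℝ → ℝ := fun t => Φ (|t| ^ (1 / p)) with hΛd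
  have hΛc : Continuous Λ := by
    have := hΛ.continuousOn isOpen_univ
    exact continuousOn_univ.1 this
  set h : ℝ → ℝ := S.indicator (fun t => (c * g t) ^ p) with hh
  have hhm : Measurable h := ((hg.const_mul c).pow_const p).indicator hS
  have hhnn : ∀ t, 0 ≤ h t := fun t => indicator_nonneg
    (fun t ht => Real.rpow_nonneg (mul_nonneg hc (hb t ht).1) _) t
  have hhb : ∀ t, h t ≤ (c * |K|) ^ p := by
    intro t
    by_cases ht : t ∈ S
    · rw [hh, indicator_of_mem ht]
      have := hb t ht
      apply Real.rpow_le_rpow (mul_nonneg hc this.1) _ hp0.le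
      exact mul_le_mul_of_nonneg_left (this.2.trans (le_abs_self K)) hc
    · rw [hh, indicator_of_notMem ht]; positivity
  have hhi : Integrable h ν := by
    refine Integrable.of_bound hhm.aestronglyMeasurable ((c * |K|) ^ p) (ae_of_all _ fun t => ?_)
    rw [Real.norm_of_nonneg (hhnn t)]; exact hhb t
  have hΛi : Integrable (Λ ∘ h) ν := by
    refine Integrable.of_bound (hΛc.measurable.comp hhm).aestronglyMeasurable
      (Λ ((c * |K|) ^ p)) (ae_of_all _ fun t => ?_)
    simp only [Function.comp, hΛd]
    rw [Real.norm_of_nonneg (hnn _)]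
    apply young_mono hΦ
    rw [abs_of_nonneg (by positivity)]
    apply Real.rpow_le_rpow (abs_nonneg _) _ (by positivity)
    rw [abs_of_nonneg (hhnn t)]
    exact (hhb t).trans (le_abs_self _)
  have hJ := hΛ.map_integral_le (μ := ν) (f := h) hΛc.continuousOn isClosed_univ
    (ae_of_all _ fun _ => mem_univ _) hhi hΛi
  have hIeq : ENNReal.ofReal (∫ t, h t ∂ν)
      = ENNReal.ofReal c ^ p * ∫⁻ t in S, ENNReal.ofReal (g t) ^ p ∂ν := by
    rw [ofReal_integral_eq_lintegral_ofReal hhi (ae_of_all _ hhnn),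
      ← lintegral_const_mul' _ _ (ENNReal.rpow_ne_top_of_nonneg hp0.le ENNReal.ofReal_ne_top),
      ← lintegral_indicator hS]
    apply lintegral_congr
    intro t
    by_cases ht : t ∈ S
    · have := (hb t ht).1
      rw [hh, indicator_of_mem ht, indicator_of_mem ht,
        ← ENNReal.mul_rpow_of_nonneg _ _ hp0.le, ← ENNReal.ofReal_mul hc,
        ENNReal.ofReal_rpow_of_nonneg (by positivity) hp0.le]
    · rw [hh, indicator_of_notMem ht, indicator_of_notMem ht, ENNReal.ofReal_zero]
  have hInn : 0 ≤ ∫ t, h t ∂ν := integral_nonneg hhnn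
  have harg : (ENNReal.ofReal c *
      (∫⁻ t in S, ENNReal.ofReal (g t) ^ p ∂ν) ^ (1 / p)).toReal = |∫ t, h t ∂ν| ^ (1 / p) := by
    rw [abs_of_nonneg hInn]
    have : ENNReal.ofReal c * (∫⁻ t in S, ENNReal.ofReal (g t) ^ p ∂ν) ^ (1 / p)
        = ENNReal.ofReal (∫ t, h t ∂ν) ^ (1 / p) := by
      rw [hIeq, ENNReal.mul_rpow_of_nonneg _ _ (by positivity), ← ENNReal.rpow_mul,
        mul_one_div_cancel hp0.ne', ENNReal.rpow_one]
    rw [this, ← ENNReal.toReal_rpow, ENNReal.toReal_ofReal hInn]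
  rw [harg]
  calc _ ≤ ENNReal.ofReal (∫ t, Λ (h t) ∂ν) := ENNReal.ofReal_le_ofReal hJ
    _ = ∫⁻ t, ENNReal.ofReal (Λ (h t)) ∂ν :=
        ofReal_integral_eq_lintegral_ofReal hΛi (ae_of_all _ fun t => hnn _)
    _ ≤ ∫⁻ t in S, ENNReal.ofReal (Φ c * Φ (g t)) ∂ν := by
        rw [← lintegral_indicator hS]
        apply lintegral_mono
        intro t
        by_cases ht : t ∈ S
        · have := (hb t ht).1
          simp only [hΛd]
          rw [hh, indicator_of_mem ht, indicator_of_mem ht, abs_of_nonneg (by positivity),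
            ← Real.rpow_mul (by positivity), mul_one_div_cancel hp0.ne', Real.rpow_one]
          exact ENNReal.ofReal_le_ofReal (hsub _ _ hc this)
        · simp only [hΛd]
          rw [hh, indicator_of_notMem ht, indicator_of_notMem ht, abs_zero,
            Real.zero_rpow (by positivity), h0, ENNReal.ofReal_zero]

lemma pos_aux (σ : ℝ → ℝ≥0∞) (hσ : Measurable σ) (a b x y : ℝ) (hax : a ≤ x) (hxy : x < y)
    (hyb : y ≤ b) (hpos : ∀ᵐ t ∂(volume.restrict (Icc a b)), σ t ≠ 0) :
    ∫⁻ t in Icc x y, σ t ≠ 0 := by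
  intro h
  rw [lintegral_eq_zero_iff hσ] at h
  have h2 := ae_restrict_of_ae_restrict_of_subset (Icc_subset_Icc hax hyb) hpos
  have h3 : ∀ᵐ t ∂(volume.restrict (Icc x y)), False := by
    filter_upwards [h, h2] with t h1 h2 using h2 h1
  rw [ae_iff] at h3
  simp at h3
  linarith

lemma tonelli_aux (μ : ℝ → ℝ≥0∞) (hμ : Measurable μ) (a b : ℝ) (M : ℝ → ℝ≥0∞)
    (hM : M = fun x => ∫⁻ t in Icc a x, μ t)
    (hMfin : ∀ x ∈ Ioo a b, M x ≠ ⊤)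
    (ν : Measure ℝ) [IsProbabilityMeasure ν] (hν : ∀ᵐ t ∂ν, t ∈ Ioo a b) :
    ∫⁻ x in Ioo a b, (∫⁻ t in Ioo x b, M x ^ (-(1/2) : ℝ) * M t ^ (-(1/2) : ℝ) ∂ν) * μ x
      ≤ 2 := by
  have hMmono : Monotone M := by
    rw [hM]; intro y z h
    exact lintegral_mono_set (Icc_subset_Icc_right h)
  have hMm : Measurable M := hMmono.measurable
  set Q : ℝ → ℝ≥0∞ := fun x => M x ^ (-(1/2) : ℝ) with hQ
  have hQm : Measurable Q := hMm.pow_const _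
  set H : ℝ → ℝ → ℝ≥0∞ := fun x t =>
    {z : ℝ × ℝ | z.1 < z.2 ∧ z.2 < b}.indicator (fun z => Q z.1 * Q z.2 * μ z.1) (x, t) with hH
  have hset : MeasurableSet {z : ℝ × ℝ | z.1 < z.2 ∧ z.2 < b} := by
    apply MeasurableSet.inter
    · exact measurableSet_lt measurable_fst measurable_snd
    · exact measurableSet_lt measurable_snd measurable_const
  have hHm : Measurable (Function.uncurry H) := by
    apply Measurable.indicator _ hset
    fun_prop
  have e1 : ∀ x, (∫⁻ t in Ioo x b, M x ^ (-(1/2) : ℝ) * M t ^ (-(1/2) : ℝ) ∂ν) * μ x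
      = ∫⁻ t, H x t ∂ν := by
    intro x
    rw [← lintegral_mul_const _ (by fun_prop), ← lintegral_indicator measurableSet_Ioo]
    apply lintegral_congr
    intro t
    simp only [hH, indicator, mem_Ioo, hQ]
    rfl
  simp only [e1]
  rw [lintegral_lintegral_swap hHm.aemeasurable]
  calc _ ≤ ∫⁻ t, 2 ∂ν := by
        apply lintegral_mono_ae
        filter_upwards [hν] with t ht
        calc ∫⁻ x in Ioo a b, H x t
            ≤ ∫⁻ x in Ioo a t, Q t * (μ x * M x ^ (-(1/2) : ℝ)) := by
              rw [← lintegral_indicator measurableSet_Ioo, ← lintegral_indicator measurableSet_Ioo]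
              apply lintegral_mono
              intro x
              simp only [hH, indicator, mem_Ioo]
              by_cases h1 : a < x ∧ x < b
              · by_cases h2 : x < t
                · have : (x, t) ∈ {z : ℝ × ℝ | z.1 < z.2 ∧ z.2 < b} := ⟨h2, ht.2⟩
                  rw [if_pos h1, if_pos this, if_pos ⟨h1.1, h2⟩]
                  simp only [hQ]
                  apply le_of_eq; ring
                · have : (x, t) ∉ {z : ℝ × ℝ | z.1 < z.2 ∧ z.2 < b} := fun h => h2 h.1
                  rw [if_pos h1, if_neg this]; exact zero_le
              · rw [if_neg h1]; exact zero_le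
          _ = Q t * ∫⁻ x in Ioo a t, μ x * M x ^ (-(1/2) : ℝ) := by
              rw [lintegral_const_mul _ (by fun_prop)]
          _ ≤ Q t * (2 * M t ^ (1/2 : ℝ)) := by
              gcongr
              have := left_aux μ hμ a t (by have := hMfin t ht; rw [hM] at this; exact this)
              rw [hM]; exact this
          _ ≤ 2 := by
              rcases eq_or_ne (M t) 0 with h0 | h0
              · rw [h0, ENNReal.zero_rpow_of_pos (by norm_num)]; simp
              · simp only [hQ]
                rw [mul_left_comm, ← ENNReal.rpow_add _ _ h0 (hMfin t ht)]
                norm_num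
    _ = 2 := by simp

/-- Weighted Orlicz–Hardy inequality for `x ↦ ∫ₓ^b f τ`: if `T(p,Φ,μ,τ,w) < ∞` then
`‖∫_•^b f τ‖_{L_μ^Φ[a,b]} ≤ C₀(Φ) T(p,Φ,μ,τ,w) ‖f‖_{L_w^p[a,b]}`. -/
theorem orlicz_hardy_right_weighted
    (a b : ℝ) (hab : a < b) (p pc : ℝ) (hp : 1 < p) (hpc : pc = p / (p - 1))
    (Φ Φinv μ w τ : ℝ → ℝ)
    (hΦ : IsYoung Φ) (hsub : Submult Φ) (hinv : IsYoungInv Φ Φinv)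
    (hΛ : ConvexOn ℝ Set.univ (fun t => Φ (|t| ^ (1 / p))))
    (hμ : IsWeight μ a b) (hw : IsWeight w a b) (hτ : IsWeight τ a b)
    (T : ℝ≥0∞)
    (hT : T = ⨆ x ∈ Set.Ioo a b,
      ((ENNReal.ofReal (Φinv ((wInt μ a x).toReal ^ (-(1/2) : ℝ)))) ^ 2)⁻¹ *
        (∫⁻ t in Set.Icc x b, ENNReal.ofReal (τ t ^ pc * w t ^ (1 - pc))) ^ (1 / pc))
    (hTfin : T < ⊤) :
    ∀ f : ℝ → ℝ, Measurable f →
      (∫⁻ t in Set.Icc a b, ENNReal.ofReal (|f t| ^ p * w t)) < ⊤ →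
      luxNorm Φ μ a b (fun x => ∫ t in x..b, f t * τ t)
        ≤ ENNReal.ofReal (2 * (Φinv (1/2))⁻¹) * T * lpNorm w p a b f := by
  intro f hf hN
  have hpq : p.HolderConjugate pc := by
    rw [hpc]; exact Real.HolderConjugate.conjExponent hp
  have hp0 : 0 < p := hpq.pos
  have hpc0 : 0 < pc := hpq.symm.pos
  have hΦ' := hΦ
  obtain ⟨hcv, he, h0, hnn, -⟩ := hΦ'
  obtain ⟨hi1, hi2, hi3⟩ := hinv
  obtain ⟨hμm, hμ0, hμp⟩ := hμ
  obtain ⟨hwm, hw0, hwp⟩ := hw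
  obtain ⟨hτm, hτ0, hτp⟩ := hτ
  set σ : ℝ → ℝ≥0∞ := fun t => ENNReal.ofReal (τ t ^ pc * w t ^ (1 - pc)) with hσ
  have hσm : Measurable σ := by fun_prop
  have hσp : ∀ᵐ t ∂(volume.restrict (Icc a b)), σ t ≠ 0 := by
    filter_upwards [hwp, hτp] with t h1 h2
    simp only [hσ, ne_eq, ENNReal.ofReal_eq_zero, not_le]
    positivity
  set m : ℝ → ℝ≥0∞ := fun t => ENNReal.ofReal (μ t) with hm
  have hmm : Measurable m := by fun_prop
  have hmp : ∀ᵐ t ∂(volume.restrict (Icc a b)), m t ≠ 0 := by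
    filter_upwards [hμp] with t h1
    simpa only [hm, ne_eq, ENNReal.ofReal_eq_zero, not_le] using h1
  set W : ℝ → ℝ≥0∞ := fun x => ∫⁻ t in Icc x b, σ t with hW
  set M : ℝ → ℝ≥0∞ := fun x => ∫⁻ t in Icc a x, m t with hM
  have hWpos : ∀ x ∈ Ioo a b, W x ≠ 0 := fun x hx =>
    pos_aux σ hσm a b x b hx.1.le hx.2 le_rfl hσp
  have hMpos : ∀ x ∈ Ioo a b, M x ≠ 0 := fun x hx =>
    pos_aux m hmm a b a x le_rfl hx.1 hx.2.le hmp
  have hMmono : Monotone M := by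
    intro y z h
    exact lintegral_mono_set (Icc_subset_Icc_right h)
  have hMm : Measurable M := hMmono.measurable
  set g : ℝ → ℝ := fun x => Φinv ((M x).toReal ^ (-(1/2) : ℝ)) with hg
  have hTle : ∀ x ∈ Ioo a b, (ENNReal.ofReal (g x) ^ 2)⁻¹ * W x ^ (1 / pc) ≤ T := by
    intro x hx
    rw [hT]
    exact le_iSup₂ (f := fun x (_ : x ∈ Ioo a b) =>
      ((ENNReal.ofReal (Φinv ((wInt μ a x).toReal ^ (-(1/2) : ℝ)))) ^ 2)⁻¹ *
        (∫⁻ t in Set.Icc x b, ENNReal.ofReal (τ t ^ pc * w t ^ (1 - pc))) ^ (1 / pc)) x hx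
  have hΦinv0 : Φinv 0 = 0 := by have := hi3 0 le_rfl; rwa [h0] at this
  have hWrpos : ∀ x ∈ Ioo a b, W x ^ (1 / pc) ≠ 0 := by
    intro x hx h
    rw [ENNReal.rpow_eq_zero_iff_of_pos (by positivity)] at h
    exact hWpos x hx h
  have hMfin : ∀ x ∈ Ioo a b, M x ≠ ⊤ := by
    intro x hx h
    have := hTle x hx
    simp only [hg] at this
    rw [h, ENNReal.toReal_top, Real.zero_rpow (by norm_num), hΦinv0, ENNReal.ofReal_zero,
      zero_pow two_ne_zero, ENNReal.inv_zero, ENNReal.top_mul (hWrpos x hx)] at this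
    exact absurd hTfin (not_lt.2 this)
  have hMr : ∀ x ∈ Ioo a b, 0 < (M x).toReal := fun x hx =>
    ENNReal.toReal_pos (hMpos x hx) (hMfin x hx)
  have hΦg : ∀ x, Φ (g x) = (M x).toReal ^ (-(1/2) : ℝ) := fun x => hi2 _ (by positivity)
  have hg0 : ∀ x, 0 ≤ g x := fun x => hi1 _ (by positivity)
  have hgpos : ∀ x ∈ Ioo a b, 0 < g x := by
    intro x hx
    rcases (hg0 x).eq_or_lt with h | h
    · have h1 := hΦg x
      rw [← h, h0] at h1
      have := Real.rpow_pos_of_pos (hMr x hx) (-(1/2) : ℝ)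
      linarith
    · exact h
  have hinvmono : ∀ u v, 0 ≤ u → u ≤ v → Φinv u ≤ Φinv v := by
    intro u v hu huv
    by_contra! hlt
    have := young_mono hΦ (s := Φinv v) (t := Φinv u)
      (by rw [abs_of_nonneg (hi1 v (hu.trans huv))]; exact hlt.le)
    rw [hi2 v (hu.trans huv), hi2 u hu] at this
    have : u = v := le_antisymm huv this
    rw [this] at hlt
    exact lt_irrefl _ hlt
  have hgm : Measurable g := by
    have h1 : Monotone (fun u => Φinv (max u 0)) := fun u v huv =>
      hinvmono _ _ (le_max_right _ _) (max_le_max_right 0 huv)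
    have h2 : g = (fun u => Φinv (max u 0)) ∘ (fun x => (M x).toReal ^ (-(1/2) : ℝ)) := by
      funext x
      simp only [hg, Function.comp]
      rw [max_eq_left (by positivity)]
    rw [h2]
    exact h1.measurable.comp (by fun_prop)
  have hganti : ∀ x ∈ Ioo a b, ∀ t ∈ Ioo x b, g t ≤ g x := by
    intro x hx t ht
    apply hinvmono _ _ (by positivity)
    apply Real.rpow_le_rpow_of_nonpos (hMr x hx) _ (by norm_num)
    exact ENNReal.toReal_mono (hMfin t ⟨hx.1.trans ht.1, ht.2⟩) (hMmono ht.1.le)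
  set k : ℝ → ℝ≥0∞ := fun x => ENNReal.ofReal (g x) with hk
  have hkm : Measurable k := by fun_prop
  have hk0 : ∀ x ∈ Ioo a b, k x ≠ 0 := fun x hx => by
    simpa only [hk, ne_eq, ENNReal.ofReal_eq_zero, not_le] using hgpos x hx
  have hkt : ∀ x, k x ≠ ⊤ := fun x => ENNReal.ofReal_ne_top
  have hWT : ∀ x ∈ Ioo a b, W x ^ (1 / pc) ≤ T * k x ^ 2 := by
    intro x hx
    have := hTle x hx
    rw [mul_comm, ← div_eq_mul_inv] at this
    exact (ENNReal.div_le_iff (pow_ne_zero 2 (hk0 x hx)) (ENNReal.pow_ne_top (hkt x))).1 this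
  have hWfin : ∀ x ∈ Ioo a b, W x ≠ ⊤ := by
    intro x hx h
    have := hWT x hx
    rw [h, ENNReal.top_rpow_of_pos (by positivity)] at this
    exact absurd (top_le_iff.1 this)
      (ENNReal.mul_ne_top hTfin.ne (ENNReal.pow_ne_top (hkt x)))
  have hWT2 : ∀ x ∈ Ioo a b, W x ^ (1 / (2 * pc)) ≤ T ^ (1/2 : ℝ) * k x := by
    intro x hx
    have := ENNReal.rpow_le_rpow (hWT x hx) (by norm_num : (0:ℝ) ≤ 1/2)
    rw [← ENNReal.rpow_mul, ENNReal.mul_rpow_of_nonneg _ _ (by norm_num), ← ENNReal.rpow_natCast,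
      ← ENNReal.rpow_mul] at this
    norm_num at this ⊢
    convert this using 2
  have hT0 : T ≠ 0 := by
    intro h
    have hx : (a + b) / 2 ∈ Ioo a b := ⟨by linarith, by linarith⟩
    have := hWT _ hx
    rw [h, zero_mul] at this
    exact hWrpos _ hx (le_zero_iff.1 this)
  set κ := Φinv (1/2) with hκ
  have hΦκ : Φ κ = 1/2 := hi2 _ (by norm_num)
  have hκpos : 0 < κ := by
    rcases (hi1 (1/2) (by norm_num)).eq_or_lt with h | h
    · rw [← hκ] at h; rw [← h, h0] at hΦκ; norm_num at hΦκ
    · exact h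
  set D : ℝ → ℝ≥0∞ := fun t => ENNReal.ofReal (|f t| ^ p * w t) with hD
  have hDm : Measurable D := by
    have : Measurable fun t => |f t| := hf.abs
    fun_prop
  set N0 : ℝ≥0∞ := ∫⁻ t in Icc a b, D t with hN0
  set F : ℝ → ℝ := fun x => ∫ t in x..b, f t * τ t with hF
  have hFle : ∀ x ∈ Ioo a b, ENNReal.ofReal |F x| ≤
      ∫⁻ t in Ioo x b, ENNReal.ofReal (|f t| * τ t) := by
    intro x hx
    simp only [hF]
    rw [intervalIntegral.integral_of_le hx.2.le, setLIntegral_congr Ioo_ae_eq_Ioc,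
      ← Real.enorm_eq_ofReal_abs]
    refine (enorm_integral_le_lintegral_enorm _).trans (le_of_eq ?_)
    apply lintegral_congr
    intro t
    rw [Real.enorm_eq_ofReal_abs, abs_mul, abs_of_nonneg (hτ0 t)]
  have hsubset : ∀ x ∈ Ioo a b, Ioo x b ⊆ Icc a b := fun x hx t ht =>
    ⟨(hx.1.trans ht.1).le, ht.2.le⟩
  -- pointwise bound
  have hpt : ∀ x ∈ Ioo a b, ENNReal.ofReal |F x| ≤
      2 * T * (k x * (∫⁻ t in Ioo x b, D t * k t ^ p) ^ (1 / p)) := by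
    intro x hx
    have hH := holder_aux hpq w τ f hwm hτm hf hτ0 x b
      (ae_restrict_of_ae_restrict_of_subset (hsubset x hx) hwp) W rfl (hWfin x hx)
      (fun t ht => hWpos t ⟨hx.1.trans ht.1, ht.2⟩)
    refine (hFle x hx).trans (hH.trans ?_)
    have hb1 : (2 * W x ^ (1/2 : ℝ)) ^ (1 / pc) ≤ 2 * (T ^ (1/2 : ℝ) * k x) := by
      rw [ENNReal.mul_rpow_of_nonneg _ _ (by positivity), ← ENNReal.rpow_mul]
      apply mul_le_mul'
      · calc (2:ℝ≥0∞) ^ (1 / pc) ≤ 2 ^ (1:ℝ) := by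
              apply ENNReal.rpow_le_rpow_of_exponent_le (by norm_num)
              rw [div_le_one hpc0]; exact hpq.symm.lt.le
          _ = 2 := ENNReal.rpow_one _
      · have := hWT2 x hx
        have e : (1/2 : ℝ) * (1 / pc) = 1 / (2 * pc) := by field_simp
        rw [e]
        exact this
    have hb2 : (∫⁻ t in Ioo x b, D t * W t ^ (p / (2 * pc))) ^ (1 / p) ≤
        T ^ (1/2 : ℝ) * (∫⁻ t in Ioo x b, D t * k t ^ p) ^ (1 / p) := by
      calc _ ≤ (∫⁻ t in Ioo x b, (T ^ (1/2 : ℝ)) ^ p * (D t * k t ^ p)) ^ (1 / p) := by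
            apply ENNReal.rpow_le_rpow _ (by positivity)
            apply setLIntegral_mono' measurableSet_Ioo
            intro t ht
            have h1 := ENNReal.rpow_le_rpow (hWT2 t ⟨hx.1.trans ht.1, ht.2⟩) hp0.le
            rw [← ENNReal.rpow_mul, ENNReal.mul_rpow_of_nonneg _ _ hp0.le] at h1
            have e : p / (2 * pc) = 1 / (2 * pc) * p := by ring
            rw [e, mul_left_comm]
            gcongr
        _ = _ := by
            rw [lintegral_const_mul _ (by fun_prop), ENNReal.mul_rpow_of_nonneg _ _ (by positivity),
              ← ENNReal.rpow_mul, mul_one_div_cancel hp0.ne', ENNReal.rpow_one]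
    refine (mul_le_mul' hb2 hb1).trans (le_of_eq ?_)
    have hTT : T = T ^ (1/2 : ℝ) * T ^ (1/2 : ℝ) := by
      rw [← ENNReal.rpow_add _ _ hT0 hTfin.ne]; norm_num
    conv_rhs => rw [hTT]
    ring
  have hlp : lpNorm w p a b f = N0 ^ (1 / p) := rfl
  have hIcc : ∀ G : ℝ → ℝ≥0∞, ∫⁻ x in Icc a b, G x = ∫⁻ x in Ioo a b, G x := fun G =>
    (setLIntegral_congr Ioo_ae_eq_Icc).symm
  rcases eq_or_ne N0 0 with hz | hz
  · -- trivial case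
    have hFz : ∀ x ∈ Ioo a b, F x = 0 := by
      intro x hx
      have h1 := hpt x hx
      have h2 : ∫⁻ t in Ioo x b, D t * k t ^ p = 0 := by
        rw [hN0, lintegral_eq_zero_iff hDm] at hz
        have hz2 := ae_restrict_of_ae_restrict_of_subset (hsubset x hx) hz
        rw [lintegral_eq_zero_iff (by fun_prop)]
        filter_upwards [hz2] with t ht
        simp only [Pi.zero_apply] at ht ⊢
        rw [ht, zero_mul]
      rw [h2, ENNReal.zero_rpow_of_pos (by positivity), mul_zero, mul_zero] at h1
      have := ENNReal.ofReal_eq_zero.1 (le_zero_iff.1 h1)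
      exact abs_nonpos_iff.1 this
    have : luxNorm Φ μ a b F = 0 := by
      rw [← le_zero_iff]
      refine ENNReal.le_of_forall_pos_le_add ?_
      intro ε hε _
      rw [zero_add]
      apply sInf_le
      refine ⟨ε, by exact_mod_cast hε, by simp, ?_⟩
      rw [hIcc]
      have : ∫⁻ x in Ioo a b, ENNReal.ofReal (Φ (F x / ε) * μ x) = ∫⁻ x in Ioo a b, 0 := by
        apply setLIntegral_congr_fun measurableSet_Ioo
        intro x hx
        simp only
        rw [hFz x hx, zero_div, h0, zero_mul, ENNReal.ofReal_zero]
      rw [this]; simp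
    rw [this]; exact zero_le
  -- main case
  have hNt : N0 ≠ ⊤ := hN.ne
  set ν : Measure ℝ := (volume.restrict (Ioo a b)).withDensity (fun t => N0⁻¹ * D t) with hν
  have hνp : IsProbabilityMeasure ν := by
    constructor
    rw [hν, withDensity_apply _ MeasurableSet.univ, Measure.restrict_univ,
      lintegral_const_mul _ hDm, ← hIcc, ENNReal.inv_mul_cancel hz hNt]
  have hνae : ∀ᵐ t ∂ν, t ∈ Ioo a b :=
    (withDensity_absolutelyContinuous _ _).ae_le (ae_restrict_mem measurableSet_Ioo)
  have hνint : ∀ x ∈ Ioo a b, ∫⁻ t in Ioo x b, D t * k t ^ p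
      = N0 * ∫⁻ t in Ioo x b, k t ^ p ∂ν := by
    intro x hx
    rw [hν, setLIntegral_withDensity_eq_setLIntegral_mul _ (by fun_prop) (by fun_prop)
      measurableSet_Ioo, Measure.restrict_restrict measurableSet_Ioo,
      inter_eq_left.2 (Ioo_subset_Ioo_left hx.1.le), ← lintegral_const_mul _ (by fun_prop)]
    apply lintegral_congr
    intro t
    simp only [Pi.mul_apply]
    rw [← mul_assoc, ← mul_assoc, ENNReal.mul_inv_cancel hz hNt, one_mul]
  set N : ℝ≥0∞ := N0 ^ (1 / p) with hNd
  have hN0' : N ≠ 0 := by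
    intro h; rw [hNd, ENNReal.rpow_eq_zero_iff_of_pos (by positivity)] at h; exact hz h
  have hNt' : N ≠ ⊤ := ENNReal.rpow_ne_top_of_nonneg (by positivity) hNt
  set R : ℝ := 2 * T.toReal * N.toReal with hR
  have hRpos : 0 < R := by
    have := ENNReal.toReal_pos hT0 hTfin.ne
    have := ENNReal.toReal_pos hN0' hNt'
    positivity
  have hRE : ENNReal.ofReal R = 2 * T * N := by
    rw [hR, ENNReal.ofReal_mul (by positivity), ENNReal.ofReal_mul (by norm_num),
      ENNReal.ofReal_toReal hTfin.ne, ENNReal.ofReal_toReal hNt']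
    norm_num
  have hpt2 : ∀ x ∈ Ioo a b, |F x| / R ≤
      (k x * (∫⁻ t in Ioo x b, k t ^ p ∂ν) ^ (1 / p)).toReal := by
    intro x hx
    have h1 := hpt x hx
    rw [hνint x hx, ENNReal.mul_rpow_of_nonneg _ _ (by positivity)] at h1
    have h2 : ENNReal.ofReal |F x| ≤
        ENNReal.ofReal R * (k x * (∫⁻ t in Ioo x b, k t ^ p ∂ν) ^ (1 / p)) := by
      rw [hRE]; refine h1.trans (le_of_eq ?_); ring
    have hfin : k x * (∫⁻ t in Ioo x b, k t ^ p ∂ν) ^ (1 / p) ≠ ⊤ := by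
      apply ENNReal.mul_ne_top (hkt x)
      apply ENNReal.rpow_ne_top_of_nonneg (by positivity)
      apply ne_top_of_le_ne_top (ENNReal.rpow_ne_top_of_nonneg hp0.le (hkt x))
      calc ∫⁻ t in Ioo x b, k t ^ p ∂ν ≤ ∫⁻ t in Ioo x b, k x ^ p ∂ν := by
            apply setLIntegral_mono' measurableSet_Ioo
            intro t ht
            apply ENNReal.rpow_le_rpow _ hp0.le
            exact ENNReal.ofReal_le_ofReal (hganti x hx t ht)
        _ ≤ k x ^ p * 1 := by
            rw [setLIntegral_const]
            gcongr
            exact prob_le_one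
        _ = _ := mul_one _
    rw [← ENNReal.ofReal_toReal hfin, ← ENNReal.ofReal_mul hRpos.le,
      ENNReal.ofReal_le_ofReal_iff (by positivity)] at h2
    rw [div_le_iff₀ hRpos]
    linarith
  have hofM : ∀ x ∈ Ioo a b, ENNReal.ofReal (Φ (g x)) = M x ^ (-(1/2) : ℝ) := by
    intro x hx
    rw [hΦg, ← ENNReal.ofReal_rpow_of_pos (hMr x hx), ENNReal.ofReal_toReal (hMfin x hx)]
  have hpt3 : ∀ x ∈ Ioo a b, ENNReal.ofReal (Φ (F x / (R / κ)) * μ x) ≤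
      ENNReal.ofReal (1/2) *
        ((∫⁻ t in Ioo x b, M x ^ (-(1/2) : ℝ) * M t ^ (-(1/2) : ℝ) ∂ν) * m x) := by
    intro x hx
    have h1 : Φ (F x / (R / κ)) ≤ 1/2 * Φ (|F x| / R) := by
      rw [← hΦκ]
      refine le_trans ?_ (hsub _ _ hκpos.le (by positivity))
      apply young_mono hΦ
      rw [abs_div, abs_of_pos (by positivity : 0 < R / κ)]
      apply le_of_eq
      field_simp
    have h2 : Φ (|F x| / R) ≤ Φ ((k x * (∫⁻ t in Ioo x b, k t ^ p ∂ν) ^ (1 / p)).toReal) := by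
      apply young_mono hΦ
      rw [abs_of_nonneg (by positivity)]
      exact hpt2 x hx
    have h3 := jensen_aux hΦ hsub hp hΛ ν g hgm (g x) (g x) (hg0 x) (Ioo x b) measurableSet_Ioo
      (fun t ht => ⟨hg0 t, hganti x hx t ht⟩)
    have h4 : ∫⁻ t in Ioo x b, ENNReal.ofReal (Φ (g x) * Φ (g t)) ∂ν
        = ∫⁻ t in Ioo x b, M x ^ (-(1/2) : ℝ) * M t ^ (-(1/2) : ℝ) ∂ν := by
      apply setLIntegral_congr_fun measurableSet_Ioo
      intro t ht
      simp only
      rw [ENNReal.ofReal_mul (hnn _), hofM x hx, hofM t ⟨hx.1.trans ht.1, ht.2⟩]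
    rw [h4] at h3
    rw [ENNReal.ofReal_mul (hnn _), ← mul_assoc]
    refine mul_le_mul' ?_ le_rfl
    calc _ ≤ ENNReal.ofReal (1/2 * Φ (|F x| / R)) := ENNReal.ofReal_le_ofReal h1
      _ = ENNReal.ofReal (1/2) * ENNReal.ofReal (Φ (|F x| / R)) :=
          ENNReal.ofReal_mul (by norm_num)
      _ ≤ _ := by
          gcongr
          exact (ENNReal.ofReal_le_ofReal h2).trans h3
  have hton := tonelli_aux m hmm a b M rfl hMfin ν hνae
  have hfinal : ENNReal.ofReal (2 * κ⁻¹) * T * lpNorm w p a b f = ENNReal.ofReal (R / κ) := by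
    rw [hlp, div_eq_mul_inv, ENNReal.ofReal_mul hRpos.le, hRE, ENNReal.ofReal_mul (by norm_num)]
    rw [show ENNReal.ofReal 2 = 2 by norm_num]
    ring
  rw [hfinal]
  apply sInf_le
  refine ⟨R / κ, by positivity, rfl, ?_⟩
  rw [hIcc]
  calc _ ≤ _ := setLIntegral_mono' measurableSet_Ioo hpt3
    _ = ENNReal.ofReal (1/2) * _ := lintegral_const_mul' _ _ ENNReal.ofReal_ne_top
    _ ≤ ENNReal.ofReal (1/2) * 2 := by gcongr
    _ = 1 := by
      rw [show (2:ℝ≥0∞) = ENNReal.ofReal 2 by norm_num, ← ENNReal.ofReal_mul (by norm_num)]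
      norm_num
end
end

section
/- Let -∞ < a < b < ∞, let μ be a weight on [a,b], and let Φ be a Young function that is submultiplicative and invertible on [0,∞). Then for every t ∈ (a,b), ‖ x ↦ Φ^{-1}( μ[x,b]^{-1/2} ) ‖_{L_μ^Φ[t,b]} ≤ [ Φ^{-1}(1/2) · Φ^{-1}( μ[t,b]^{-1/2} ) ]^{-1}. -/
open MeasureTheory Set Filter
open scoped ENNReal NNReal

noncomputable section

lemma aux_anti (μ : ℝ → ℝ) (b : ℝ) : Antitone (fun x => wInt μ x b) := by
  intro x y hxy
  exact lintegral_mono_set (Icc_subset_Icc_left hxy)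

/-- The weighted measure on `[t,b]`. -/
def auxNu (μ : ℝ → ℝ) (t b : ℝ) : Measure ℝ :=
  (volume.restrict (Icc t b)).withDensity (fun x => ENNReal.ofReal (μ x))

lemma auxNu_univ (μ : ℝ → ℝ) (t b : ℝ) : auxNu μ t b univ = wInt μ t b := by
  simp [auxNu, wInt]

lemma auxNu_Ici (μ : ℝ → ℝ) (t b y : ℝ) : auxNu μ t b (Ici y) ≤ wInt μ y b := by
  rw [auxNu, withDensity_apply _ measurableSet_Ici, Measure.restrict_restrict measurableSet_Ici]
  refine lintegral_mono_set ?_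
  rintro x ⟨h1, h2⟩
  exact ⟨h1, h2.2⟩

lemma auxNu_level (μ : ℝ → ℝ) (t b : ℝ) (hM : wInt μ t b ≠ ∞) (r : ℝ≥0∞) :
    auxNu μ t b {x | wInt μ x b ≤ r} ≤ r := by
  have : IsFiniteMeasure (auxNu μ t b) := ⟨by rw [auxNu_univ]; exact hM.lt_top⟩
  have hmeas : MeasurableSet {x | wInt μ x b ≤ r} :=
    (aux_anti μ b).measurable measurableSet_Iic
  rw [hmeas.measure_eq_iSup_isCompact]
  refine iSup₂_le fun K hK => iSup_le fun hKc => ?_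
  rcases K.eq_empty_or_nonempty with rfl | hne
  · simp
  · have hmin := hKc.sInf_mem hne
    refine le_trans (measure_mono ?_) ((auxNu_Ici μ t b (sInf K)).trans (hK hmin))
    intro x hx
    exact csInf_le hKc.bddBelow hx

lemma aux_bound (μ : ℝ → ℝ) (t b : ℝ) (hM : wInt μ t b ≠ ∞) (h0 : wInt μ t b ≠ 0) :
    ∫⁻ x, ENNReal.ofReal ((wInt μ x b).toReal ^ (-(1/2) : ℝ)) ∂(auxNu μ t b)
      ≤ ENNReal.ofReal (2 * (wInt μ t b).toReal ^ (1/2 : ℝ)) := by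
  have hmeas : Measurable (fun x => (wInt μ x b).toReal ^ (-(1/2) : ℝ)) :=
    ((aux_anti μ b).measurable.ennreal_toReal).pow_const _
  rw [lintegral_eq_lintegral_meas_le _ (Eventually.of_forall fun x => by positivity)
    hmeas.aemeasurable]
  set M := (wInt μ t b).toReal with hMdef
  have hMpos : 0 < M := ENNReal.toReal_pos h0 hM
  set A : ℝ := M ^ (-(1/2) : ℝ) with hA
  have hApos : 0 < A := by positivity
  have hsplit : Ioi (0:ℝ) = Ioc 0 A ∪ Ioi A := (Ioc_union_Ioi_eq_Ioi hApos.le).symm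
  rw [hsplit]
  refine (lintegral_union_le _ _ _).trans ?_
  have e1 : ∫⁻ s in Ioc 0 A, auxNu μ t b {x | s ≤ (wInt μ x b).toReal ^ (-(1/2) : ℝ)}
      ≤ ENNReal.ofReal (M ^ (1/2 : ℝ)) := by
    calc _ ≤ ∫⁻ s in Ioc 0 A, ENNReal.ofReal M := by
          refine lintegral_mono fun s => ?_
          refine (measure_mono (subset_univ _)).trans ?_
          rw [auxNu_univ, hMdef, ENNReal.ofReal_toReal hM]
      _ = ENNReal.ofReal (M ^ (1/2 : ℝ)) := by
          rw [setLIntegral_const, Real.volume_Ioc, ← ENNReal.ofReal_mul hMpos.le, sub_zero, hA]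
          congr 1
          nth_rewrite 1 [← Real.rpow_one M]
          rw [← Real.rpow_add hMpos]
          norm_num
  have e2 : ∫⁻ s in Ioi A, auxNu μ t b {x | s ≤ (wInt μ x b).toReal ^ (-(1/2) : ℝ)}
      ≤ ENNReal.ofReal (M ^ (1/2 : ℝ)) := by
    calc _ ≤ ∫⁻ s in Ioi A, ENNReal.ofReal (s ^ (-2 : ℝ)) := by
          refine setLIntegral_mono' measurableSet_Ioi fun s hs => ?_
          have hs0 : 0 < s := hApos.trans hs
          refine (measure_mono ?_).trans (auxNu_level μ t b hM _)
          intro x hx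
          simp only [mem_ofPred_eq] at hx ⊢
          have hm : 0 < (wInt μ x b).toReal := by
            rcases (ENNReal.toReal_nonneg (a := wInt μ x b)).eq_or_lt with h | h
            · rw [← h, Real.zero_rpow (by norm_num)] at hx
              linarith
            · exact h
          have hfin : wInt μ x b ≠ ∞ := by
            intro h
            simp [h] at hm
          rw [← ENNReal.ofReal_toReal hfin]
          apply ENNReal.ofReal_le_ofReal
          have := Real.rpow_le_rpow_of_nonpos hs0 hx (show (-2:ℝ) ≤ 0 by norm_num)
          rw [← Real.rpow_mul hm.le] at this
          norm_num at this
          simpa using this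
      _ = ENNReal.ofReal (M ^ (1/2 : ℝ)) := by
          rw [← ofReal_integral_eq_lintegral_ofReal
            (integrableOn_Ioi_rpow_of_lt (by norm_num) hApos)
            ((ae_restrict_iff' measurableSet_Ioi).2 (Eventually.of_forall fun s hs =>
              Real.rpow_nonneg (hApos.trans hs).le _)),
            integral_Ioi_rpow_of_lt (by norm_num) hApos, hA, ← Real.rpow_mul hMpos.le]
          norm_num
  refine (add_le_add e1 e2).trans ?_
  rw [← ENNReal.ofReal_add (by positivity) (by positivity), two_mul]

/-- Gauge-norm bound: `‖Φ⁻¹(μ[•,b]^{-1/2})‖_{L_μ^Φ[t,b]} ≤ [Φ⁻¹(1/2) Φ⁻¹(μ[t,b]^{-1/2})]⁻¹`. -/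
theorem gauge_norm_inv_sqrt_bound
    (a b : ℝ) (hab : a < b) (Φ Φinv μ : ℝ → ℝ)
    (hΦ : IsYoung Φ) (hsub : Submult Φ) (hinv : IsYoungInv Φ Φinv)
    (hμ : IsWeight μ a b) :
    ∀ t ∈ Set.Ioo a b,
      luxNorm Φ μ t b (fun x => Φinv ((wInt μ x b).toReal ^ (-(1/2) : ℝ)))
        ≤ (ENNReal.ofReal (Φinv (1/2) * Φinv ((wInt μ t b).toReal ^ (-(1/2) : ℝ))))⁻¹ := by
  intro t _
  obtain ⟨-, -, hΦ0, hΦnn, -⟩ := hΦ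
  obtain ⟨hi0, hi1, hi2⟩ := hinv
  obtain ⟨hμm, hμ0, -⟩ := hμ
  have hinv0 : Φinv 0 = 0 := by
    have := hi2 0 le_rfl
    rwa [hΦ0] at this
  have hpos : ∀ s, 0 < s → 0 < Φinv s := by
    intro s hs
    refine (hi0 s hs.le).lt_of_ne fun h => ?_
    have := hi1 s hs.le
    rw [← h, hΦ0] at this
    linarith
  by_cases hM0 : (wInt μ t b).toReal = 0
  · rw [hM0, Real.zero_rpow (by norm_num), hinv0]
    simp
  have hM : wInt μ t b ≠ ∞ := fun h => hM0 (by simp [h])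
  have h0 : wInt μ t b ≠ 0 := fun h => hM0 (by simp [h])
  have hbd := aux_bound μ t b hM h0
  set M := (wInt μ t b).toReal with hMdef
  have hMpos : 0 < M := ENNReal.toReal_pos h0 hM
  have hApos : 0 < M ^ (-(1/2) : ℝ) := by positivity
  have hp1 := hpos (1/2) (by norm_num)
  have hp2 := hpos _ hApos
  set d := Φinv (1/2) * Φinv (M ^ (-(1/2) : ℝ)) with hd
  have hdpos : 0 < d := mul_pos hp1 hp2
  rw [← ENNReal.ofReal_inv_of_pos hdpos]
  refine sInf_le ⟨d⁻¹, inv_pos.2 hdpos, rfl, ?_⟩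
  have hΦd : Φ d ≤ 1/2 * M ^ (-(1/2) : ℝ) := by
    have := hsub _ _ hp1.le hp2.le
    rwa [hi1 _ (by norm_num), hi1 _ hApos.le] at this
  have hmeas : Measurable (fun x => (wInt μ x b).toReal ^ (-(1/2) : ℝ)) :=
    ((aux_anti μ b).measurable.ennreal_toReal).pow_const _
  have hmeas' := hmeas.ennreal_ofReal
  calc _ ≤ ∫⁻ x in Icc t b, ENNReal.ofReal (1/2 * M ^ (-(1/2) : ℝ)) *
        (ENNReal.ofReal (μ x) * ENNReal.ofReal ((wInt μ x b).toReal ^ (-(1/2) : ℝ))) := by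
        refine lintegral_mono fun x => ?_
        have hg : 0 ≤ (wInt μ x b).toReal ^ (-(1/2) : ℝ) := by positivity
        rw [← ENNReal.ofReal_mul (hμ0 x), ← ENNReal.ofReal_mul (by positivity)]
        apply ENNReal.ofReal_le_ofReal
        rw [div_inv_eq_mul]
        have h1 := hsub _ _ (hi0 _ hg) hdpos.le
        rw [hi1 _ hg] at h1
        have h2 := h1.trans (mul_le_mul_of_nonneg_left hΦd hg)
        refine (mul_le_mul_of_nonneg_right h2 (hμ0 x)).trans (le_of_eq ?_)
        ring
    _ = ENNReal.ofReal (1/2 * M ^ (-(1/2) : ℝ)) *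
        ∫⁻ x, ENNReal.ofReal ((wInt μ x b).toReal ^ (-(1/2) : ℝ)) ∂(auxNu μ t b) := by
        rw [lintegral_const_mul _ (by fun_prop), auxNu,
          lintegral_withDensity_eq_lintegral_mul _ hμm.ennreal_ofReal hmeas']
        rfl
    _ ≤ ENNReal.ofReal (1/2 * M ^ (-(1/2) : ℝ)) * ENNReal.ofReal (2 * M ^ (1/2 : ℝ)) := by
        gcongr
    _ = 1 := by
        rw [← ENNReal.ofReal_mul (by positivity)]
        have : M ^ (-(1/2) : ℝ) * M ^ (1/2 : ℝ) = 1 := by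
          rw [← Real.rpow_add hMpos]
          norm_num
        rw [show 1/2 * M ^ (-(1/2) : ℝ) * (2 * M ^ (1/2 : ℝ)) = 1 by linarith]
        simp
end
end

section
/- Let 0 < b < ∞, 1 < p < ∞ with conjugate exponent p' = p/(p−1), and let w(x) = 2e^{-1/x²}/x³ on (0,b] (so that ∫_0^x w(t) dt = e^{-1/x²}). Then both quantities sup_{0<x<b} { (∫_x^b w(t) dt)^{1/p} · (∫_0^x (∫_0^t w(s) ds)^{p'} · w(t)^{1−p'} dt)^{1/p'} } and sup_{0<x<b} { (∫_0^x w(t) dt)^{1/p} · (∫_x^b (∫_t^b w(s) ds)^{p'} · w(t)^{1−p'} dt)^{1/p'} } are finite; that is, the Chua–Wheeden constant K_{p,p}(w,w,w) on [0,b] is finite. -/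
open MeasureTheory Set Filter
open scoped ENNReal NNReal

noncomputable section

lemma degW_wInt_le {t : ℝ} (ht : 0 < t) :
    wInt (fun x => 2 * Real.exp (-(1 / x ^ 2)) / x ^ 3) 0 t
      ≤ ENNReal.ofReal (Real.exp (-(1 / t ^ 2))) := by
  have hcont : ContinuousOn (fun x : ℝ => expNegInvGlue (x ^ 2)) (Icc 0 t) :=
    ((expNegInvGlue.contDiff (n := 0)).continuous.comp (continuous_pow 2)).continuousOn
  have hF : ∀ x : ℝ, 0 < x → expNegInvGlue (x ^ 2) = Real.exp (-(1 / x ^ 2)) := by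
    intro x hx
    have : ¬ (x ^ 2 ≤ 0) := by have := pow_pos hx 2; linarith
    simp [expNegInvGlue, this, hx.ne']
  have hderiv : ∀ x ∈ Ioo 0 t, HasDerivAt (fun x : ℝ => expNegInvGlue (x ^ 2))
      (2 * Real.exp (-(1 / x ^ 2)) / x ^ 3) x := by
    intro x hx
    have hx0 : 0 < x := hx.1
    have h1 : HasDerivAt (fun x : ℝ => Real.exp (-(1 / x ^ 2)))
        (2 * Real.exp (-(1 / x ^ 2)) / x ^ 3) x := by
      have h2 := ((hasDerivAt_pow 2 x).fun_inv (pow_pos hx0 2).ne').fun_neg.exp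
      simp only [one_div]
      convert h2 using 1
      field_simp
      norm_num
    refine h1.congr_of_eventuallyEq ?_
    filter_upwards [lt_mem_nhds hx0] with y hy using hF y hy
  have hnn : ∀ x ∈ Ioo 0 t, 0 ≤ 2 * Real.exp (-(1 / x ^ 2)) / x ^ 3 := by
    intro x hx
    have := hx.1
    positivity
  have hint := intervalIntegral.integrableOn_deriv_of_nonneg hcont hderiv hnn
  have hval := intervalIntegral.integral_eq_sub_of_hasDerivAt_of_le ht.le hcont hderiv
    ((intervalIntegrable_iff_integrableOn_Ioc_of_le ht.le).2 hint)
  rw [intervalIntegral.integral_of_le ht.le] at hval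
  unfold wInt
  rw [setLIntegral_congr Ioc_ae_eq_Icc.symm, ← ofReal_integral_eq_lintegral_ofReal hint, hval,
    hF t ht]
  · simp [expNegInvGlue]
  · refine (ae_restrict_iff' measurableSet_Ioc).2 (Eventually.of_forall ?_)
    intro x hx
    have := hx.1
    simp only [Pi.zero_apply]
    positivity

lemma degW_wInt_le_one {x b : ℝ} (hx : 0 ≤ x) (hb : 0 < b) :
    wInt (fun x => 2 * Real.exp (-(1 / x ^ 2)) / x ^ 3) x b ≤ 1 := by
  calc _ ≤ wInt (fun x => 2 * Real.exp (-(1 / x ^ 2)) / x ^ 3) 0 b :=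
        lintegral_mono_set (Icc_subset_Icc_left hx)
    _ ≤ _ := degW_wInt_le hb
    _ ≤ 1 := by
        rw [ENNReal.ofReal_le_one, Real.exp_le_one_iff]
        have : 0 ≤ 1 / b ^ 2 := by positivity
        linarith

/-- Formula for the power of the weight. -/
lemma degW_rpow {t q : ℝ} (ht : 0 < t) :
    (2 * Real.exp (-(1 / t ^ 2)) / t ^ 3) ^ (1 - q)
      = (t ^ 3 / 2) ^ (q - 1) * Real.exp ((q - 1) / t ^ 2) := by
  have h : 2 * Real.exp (-(1 / t ^ 2)) / t ^ 3 = (t ^ 3 / 2 * Real.exp (1 / t ^ 2))⁻¹ := by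
    rw [Real.exp_neg]; field_simp
  rw [h, Real.inv_rpow (by positivity), ← Real.rpow_neg (by positivity), neg_sub,
    Real.mul_rpow (by positivity) (by positivity), ← Real.exp_mul]
  congr 2
  ring

lemma degW_lint_le {f : ℝ → ℝ} {x y b M : ℝ} (hx : 0 ≤ x) (hy : y ≤ b)
    (h : ∀ t ∈ Icc x y, f t ≤ M) :
    ∫⁻ t in Icc x y, ENNReal.ofReal (f t) ≤ ENNReal.ofReal M * ENNReal.ofReal b := by
  calc _ ≤ ∫⁻ t in Icc x y, ENNReal.ofReal M :=
        setLIntegral_mono measurable_const fun t ht => ENNReal.ofReal_le_ofReal (h t ht)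
    _ = ENNReal.ofReal M * ENNReal.ofReal (y - x) := by
        rw [setLIntegral_const, Real.volume_Icc]
    _ ≤ _ := by gcongr; linarith

/-- For the infinitely degenerate weight `w(x) = 2e^{-1/x²}/x³` on `(0,b]`, both suprema
in the Chua–Wheeden constant `K_{p,p}(w,w,w)` are finite. -/
theorem degenerate_weight_Kpp_finite
    (b p pc : ℝ) (hb : 0 < b) (hp : 1 < p) (hpc : pc = p / (p - 1))
    (w : ℝ → ℝ) (hw : w = fun x => 2 * Real.exp (-(1 / x ^ 2)) / x ^ 3) :
    (⨆ x ∈ Set.Ioo (0:ℝ) b,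
        (wInt w x b) ^ (1 / p) *
          (∫⁻ t in Set.Icc (0:ℝ) x,
            ENNReal.ofReal ((wInt w 0 t).toReal ^ pc * w t ^ (1 - pc))) ^ (1 / pc)) < ⊤ ∧
    (⨆ x ∈ Set.Ioo (0:ℝ) b,
        (wInt w 0 x) ^ (1 / p) *
          (∫⁻ t in Set.Icc x b,
            ENNReal.ofReal ((wInt w t b).toReal ^ pc * w t ^ (1 - pc))) ^ (1 / pc)) < ⊤ := by
  have hp0 : 0 < p := by linarith
  have hpc1 : 1 < pc := by
    rw [hpc, lt_div_iff₀ (by linarith)]; linarith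
  have hpc0 : 0 < pc := by linarith
  have hconj : (pc - 1) * (1 / pc) = 1 / p := by
    have : p - 1 ≠ 0 := by linarith
    rw [hpc]; field_simp; ring
  have hw0 : w 0 = 0 := by rw [hw]; simp
  have hC : 0 ≤ (b ^ 3 / 2) ^ (pc - 1) := by positivity
  constructor
  · refine lt_of_le_of_lt (b := (ENNReal.ofReal ((b ^ 3 / 2) ^ (pc - 1)) * ENNReal.ofReal b)
      ^ (1 / pc)) ?_ (ENNReal.rpow_lt_top_of_nonneg (by positivity)
        (ENNReal.mul_ne_top ENNReal.ofReal_ne_top ENNReal.ofReal_ne_top))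
    refine iSup₂_le fun x hx => ?_
    have h1 : (wInt w x b) ^ (1 / p) ≤ 1 := by
      rw [hw]
      exact ENNReal.rpow_le_one (degW_wInt_le_one hx.1.le hb) (by positivity)
    refine (mul_le_mul' h1 le_rfl).trans ?_
    rw [one_mul]
    refine ENNReal.rpow_le_rpow ?_ (by positivity)
    refine degW_lint_le le_rfl hx.2.le ?_
    intro t ht
    rcases ht.1.eq_or_lt with h0 | h0
    · rw [← h0, hw0, Real.zero_rpow (by linarith), mul_zero]; exact hC
    · have htb : t ≤ b := ht.2.trans hx.2.le
      have hW : (wInt w 0 t).toReal ≤ Real.exp (-(1 / t ^ 2)) := by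
        rw [hw]
        exact ENNReal.toReal_le_of_le_ofReal (Real.exp_pos _).le (degW_wInt_le h0)
      have hwt : w t ^ (1 - pc) = (t ^ 3 / 2) ^ (pc - 1) * Real.exp ((pc - 1) / t ^ 2) := by
        rw [hw]; exact degW_rpow h0
      rw [hwt]
      calc _ ≤ Real.exp (-(1 / t ^ 2)) ^ pc *
            ((b ^ 3 / 2) ^ (pc - 1) * Real.exp ((pc - 1) / t ^ 2)) := by
            gcongr
        _ = (b ^ 3 / 2) ^ (pc - 1) * Real.exp (-(1 / t ^ 2)) := by
            rw [← Real.exp_mul, mul_left_comm, ← Real.exp_add]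
            congr 2
            ring
        _ ≤ (b ^ 3 / 2) ^ (pc - 1) * 1 := by
            gcongr
            rw [Real.exp_le_one_iff]
            have : 0 ≤ 1 / t ^ 2 := by positivity
            linarith
        _ = _ := mul_one _
  · refine lt_of_le_of_lt (b := (ENNReal.ofReal ((b ^ 3 / 2) ^ (pc - 1)) * ENNReal.ofReal b)
      ^ (1 / pc)) ?_ (ENNReal.rpow_lt_top_of_nonneg (by positivity)
        (ENNReal.mul_ne_top ENNReal.ofReal_ne_top ENNReal.ofReal_ne_top))
    refine iSup₂_le fun x hx => ?_
    have hx0 : 0 < x := hx.1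
    have h1 : (wInt w 0 x) ^ (1 / p) ≤ ENNReal.ofReal (Real.exp (-(1 / x ^ 2) * (1 / p))) := by
      rw [Real.exp_mul, ← ENNReal.ofReal_rpow_of_pos (Real.exp_pos _), hw]
      exact ENNReal.rpow_le_rpow (degW_wInt_le hx0) (by positivity)
    have h2 : ∫⁻ t in Set.Icc x b,
            ENNReal.ofReal ((wInt w t b).toReal ^ pc * w t ^ (1 - pc)) ≤
        ENNReal.ofReal ((b ^ 3 / 2) ^ (pc - 1) * Real.exp ((pc - 1) / x ^ 2)) *
          ENNReal.ofReal b := by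
      refine degW_lint_le hx0.le le_rfl ?_
      intro t ht
      have h0 : 0 < t := hx0.trans_le ht.1
      have hW : (wInt w t b).toReal ≤ 1 := by
        rw [hw]
        exact ENNReal.toReal_le_of_le_ofReal zero_le_one
          (by simpa using degW_wInt_le_one h0.le hb)
      have hwt : w t ^ (1 - pc) = (t ^ 3 / 2) ^ (pc - 1) * Real.exp ((pc - 1) / t ^ 2) := by
        rw [hw]; exact degW_rpow h0
      rw [hwt]
      have hW' := Real.rpow_le_one ENNReal.toReal_nonneg hW hpc0.le
      have htb := ht.2
      have hxt := ht.1
      have hpc2 : 0 ≤ pc - 1 := by linarith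
      calc _ ≤ 1 * ((t ^ 3 / 2) ^ (pc - 1) * Real.exp ((pc - 1) / t ^ 2)) := by gcongr
        _ ≤ _ := by
          rw [one_mul]
          gcongr
    refine (mul_le_mul' h1 (ENNReal.rpow_le_rpow h2 (by positivity))).trans ?_
    rw [ENNReal.ofReal_mul hC, mul_right_comm, ENNReal.mul_rpow_of_nonneg _ _
      (by positivity : 0 ≤ 1 / pc), ENNReal.ofReal_rpow_of_pos (Real.exp_pos _), ← Real.exp_mul,
      mul_left_comm, ← ENNReal.ofReal_mul (Real.exp_pos _).le, ← Real.exp_add]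
    have : -(1 / x ^ 2) * (1 / p) + (pc - 1) / x ^ 2 * (1 / pc) = 0 := by
      rw [← hconj]; ring
    rw [this]
    simp
end
end
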